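/- Let α,β>−1 and let M,N≥0 be integers with M+N>0. Then the restricted square functions (G_{M,N}^{α,β})⁺(f)(θ)=(∫₀^∞ |∂_t^M δ_N^even (H_t^{α,β})⁺f(θ)|² t^{2M+2N−1} dt)^{1/2} and (G̃_{M,N}^{α,β})⁺(f)(θ)=(∫₀^∞ |∂_t^M δ_N^odd (H̃_t^{α,β})⁺f(θ)|² t^{2M+2N−1} dt)^{1/2} are bounded on L²(μ⁺_{α,β}): there is C such that ‖(G_{M,N}^{α,β})⁺(f)‖_{L²(μ⁺_{α,β})} ≤ C‖f‖_{L²(μ⁺_{α,β})} and ‖(G̃_{M,N}^{α,β})⁺(f)‖_{L²(μ⁺_{α,β})} ≤ C‖f‖_{L²(μ⁺_{α,β})} for all f∈L²(μ⁺_{α,β}). -/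

import Mathlib

open MeasureTheory Real Set
open scoped ENNReal

noncomputable section

/-- The classical Jacobi polynomial `P_n^{α,β}`. -/
def jacobiP (α β : ℝ) (n : ℕ) (x : ℝ) : ℝ :=
  ∑ m ∈ Finset.range (n + 1),
    (Real.Gamma (α + n + 1) * Real.Gamma (α + β + n + m + 1)) /
      ((m.factorial : ℝ) * ((n - m).factorial : ℝ) * Real.Gamma (α + β + n + 1) *
        Real.Gamma (α + m + 1)) * ((x - 1) / 2) ^ m

/-- `Ψ^{α,β}(θ) = |sin(θ/2)|^{α+1/2} (cos(θ/2))^{β+1/2}`. -/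
def jPsi (α β θ : ℝ) : ℝ := |Real.sin (θ / 2)| ^ (α + 1 / 2) * Real.cos (θ / 2) ^ (β + 1 / 2)

/-- The measure `μ_{α,β}` on `(−π, π)`, with density `(Ψ^{α,β})²` w.r.t. Lebesgue measure. -/
def jacobiMeasure (α β : ℝ) : Measure ℝ :=
  (volume.restrict (Ioo (-π) π)).withDensity fun θ => ENNReal.ofReal (jPsi α β θ ^ 2)

/-- The restriction `μ⁺_{α,β}` of `μ_{α,β}` to `(0, π)`. -/
def jacobiMeasurePlus (α β : ℝ) : Measure ℝ := (jacobiMeasure α β).restrict (Ioo 0 π)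

/-- The normalizing constant `c_n^{α,β}` making `𝒫_n^{α,β}` have unit `L²(μ⁺)` norm. -/
def cJ (α β : ℝ) (n : ℕ) : ℝ :=
  (∫ θ, jacobiP α β n (Real.cos θ) ^ 2 ∂(jacobiMeasurePlus α β)) ^ (-(1 / 2) : ℝ)

/-- The normalized trigonometric Jacobi polynomial `𝒫_n^{α,β}(θ)`. -/
def trigP (α β : ℝ) (n : ℕ) (θ : ℝ) : ℝ := cJ α β n * jacobiP α β n (Real.cos θ)

/-- The eigenvalue `λ_n^{α,β} = (n + (α+β+1)/2)²`. -/
def jLam (α β : ℝ) (n : ℕ) : ℝ := ((n : ℝ) + (α + β + 1) / 2) ^ 2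

/-- The symmetrized system `Φ_n^{α,β}`. -/
def symPhi (α β : ℝ) (n : ℕ) (θ : ℝ) : ℝ :=
  if Even n then (Real.sqrt 2)⁻¹ * trigP α β (n / 2) θ
  else (Real.sqrt 2)⁻¹ * (Real.sin θ / 2) * trigP (α + 1) (β + 1) ((n - 1) / 2) θ

/-- The Jacobi functions `φ_n^{α,β} = Ψ^{α,β} 𝒫_n^{α,β}`. -/
def phiFun (α β : ℝ) (n : ℕ) (θ : ℝ) : ℝ := jPsi α β θ * trigP α β n θ

/-- The symmetrized Jacobi function system `Θ_n^{α,β}`. -/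
def jTheta (α β : ℝ) (n : ℕ) (θ : ℝ) : ℝ :=
  if Even n then (Real.sqrt 2)⁻¹ * phiFun α β (n / 2) θ
  else (Real.sqrt 2)⁻¹ * Real.sign θ * phiFun (α + 1) (β + 1) ((n - 1) / 2) θ

/-- The symmetrized Jacobi–Poisson semigroup `ℍ_t^{α,β}f(θ)` (polynomial setting). -/
def symH (α β : ℝ) (f : ℝ → ℝ) (t θ : ℝ) : ℝ :=
  ∑' n : ℕ, Real.exp (-t * Real.sqrt (jLam α β ((n + 1) / 2))) *
    (∫ φ, f φ * symPhi α β n φ ∂(jacobiMeasure α β)) * symPhi α β n θ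

/-- The symmetrized Jacobi–Poisson semigroup `H̄_t^{α,β}f(θ)` (function setting). -/
def symHbar (α β : ℝ) (f : ℝ → ℝ) (t θ : ℝ) : ℝ :=
  ∑' n : ℕ, Real.exp (-t * Real.sqrt (jLam α β ((n + 1) / 2))) *
    (∫ φ in Ioo (-π) π, f φ * jTheta α β n φ) * jTheta α β n θ

/-- The non-symmetrized Jacobi–Poisson semigroup `ℋ_t^{α,β}f(θ)` (polynomial setting). -/
def jacH (α β : ℝ) (f : ℝ → ℝ) (t θ : ℝ) : ℝ :=
  ∑' n : ℕ, Real.exp (-t * Real.sqrt (jLam α β n)) *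
    (∫ φ, f φ * trigP α β n φ ∂(jacobiMeasurePlus α β)) * trigP α β n θ

/-- The non-symmetrized Jacobi–Poisson semigroup `𝓗̄_t^{α,β}f(θ)` (function setting). -/
def jacHbar (α β : ℝ) (f : ℝ → ℝ) (t θ : ℝ) : ℝ :=
  ∑' n : ℕ, Real.exp (-t * Real.sqrt (jLam α β n)) *
    (∫ φ in Ioo 0 π, f φ * phiFun α β n φ) * phiFun α β n θ

/-- The symmetrized derivative `𝔻_{α,β}`. -/
def symD (α β : ℝ) (f : ℝ → ℝ) : ℝ → ℝ := fun θ =>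
  deriv f θ + (α - β + (α + β + 1) * Real.cos θ) / Real.sin θ * ((f θ - f (-θ)) / 2)

/-- The symmetrized derivative `D̄_{α,β}` (function setting). -/
def symDbar (α β : ℝ) (f : ℝ → ℝ) : ℝ → ℝ := fun θ =>
  deriv f θ -
    ((2 * α + 1) / 4 * (Real.cos (θ / 2) / Real.sin (θ / 2)) -
      (2 * β + 1) / 4 * Real.tan (θ / 2)) * f (-θ)

/-- The derivative `D_{α,β}` (non-symmetrized function setting). -/
def jacD (α β : ℝ) (f : ℝ → ℝ) : ℝ → ℝ := fun θ =>
  deriv f θ - (2 * α + 1) / 4 * (Real.cos (θ / 2) / Real.sin (θ / 2)) * f θ +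
    (2 * β + 1) / 4 * Real.tan (θ / 2) * f θ

/-- `δ*_{α,β} = −d/dθ − (α+1/2)cot(θ/2) + (β+1/2)tan(θ/2)`. -/
def delStar (α β : ℝ) (f : ℝ → ℝ) : ℝ → ℝ := fun θ =>
  -deriv f θ - (α + 1 / 2) * (Real.cos (θ / 2) / Real.sin (θ / 2)) * f θ +
    (β + 1 / 2) * Real.tan (θ / 2) * f θ

/-- `δ_N^even`: `N` alternating factors, rightmost (first applied) one being `δ = d/dθ`. -/
def deltaEven (α β : ℝ) : ℕ → (ℝ → ℝ) → ℝ → ℝ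
  | 0 => fun f => f
  | N + 1 => fun f => (if N % 2 = 0 then deriv else delStar α β) (deltaEven α β N f)

/-- `δ_N^odd`: `N` alternating factors, rightmost (first applied) one being `δ*_{α,β}`. -/
def deltaOdd (α β : ℝ) : ℕ → (ℝ → ℝ) → ℝ → ℝ
  | 0 => fun f => f
  | N + 1 => fun f => (if N % 2 = 0 then delStar α β else deriv) (deltaOdd α β N f)

/-- The Jacobi–Poisson kernel `H_t^{α,β}(θ,φ)` (even part of the symmetrized kernel). -/
def jHker (α β t θ φ : ℝ) : ℝ :=
  (1 / 2) * ∑' n : ℕ, Real.exp (-t * Real.sqrt (jLam α β n)) * trigP α β n θ * trigP α β n φ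

/-- The kernel `H̃_t^{α,β}(θ,φ)` (odd part of the symmetrized kernel). -/
def jHtil (α β t θ φ : ℝ) : ℝ :=
  (1 / 8) * Real.sin θ * Real.sin φ *
    ∑' n : ℕ, Real.exp (-t * Real.sqrt (jLam α β (n + 1))) *
      trigP (α + 1) (β + 1) n θ * trigP (α + 1) (β + 1) n φ

/-- `μ⁺_{α,β}(B(θ,r))` where `B(θ,r) = (θ−r, θ+r) ∩ (0,π)`. -/
def ballMeasure (α β θ r : ℝ) : ℝ≥0∞ := jacobiMeasurePlus α β (Ioo (θ - r) (θ + r))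

/-- The Muckenhoupt class `A_p^{α,β}` (`1 < p < ∞`) on `(−π,π)` w.r.t. `μ_{α,β}`. -/
def IsApWeight (α β p : ℝ) (w : ℝ → ℝ) : Prop :=
  (∀ θ, 0 ≤ w θ) ∧
    ∃ C : ℝ, ∀ a b : ℝ, -π ≤ a → a ≤ b → b ≤ π →
      (∫⁻ θ in Ioo a b, ENNReal.ofReal (w θ) ∂(jacobiMeasure α β)) *
          (∫⁻ θ in Ioo a b, ENNReal.ofReal (w θ ^ (-1 / (p - 1))) ∂(jacobiMeasure α β)) ^
            (p - 1) ≤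
        ENNReal.ofReal C * jacobiMeasure α β (Ioo a b) ^ p

/-- The Muckenhoupt class `A_1^{α,β}` on `(−π,π)` w.r.t. `μ_{α,β}`. -/
def IsA1Weight (α β : ℝ) (w : ℝ → ℝ) : Prop :=
  (∀ θ, 0 ≤ w θ) ∧
    ∃ C : ℝ, ∀ a b : ℝ, -π ≤ a → a ≤ b → b ≤ π →
      ∫⁻ θ in Ioo a b, ENNReal.ofReal (w θ) ∂(jacobiMeasure α β) ≤
        ENNReal.ofReal C *
          essInf (fun θ => ENNReal.ofReal (w θ)) ((jacobiMeasure α β).restrict (Ioo a b)) *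
          jacobiMeasure α β (Ioo a b)

/-- The Muckenhoupt class `(A_p^{α,β})⁺` (`1 < p < ∞`) on `(0,π)` w.r.t. `μ⁺_{α,β}`. -/
def IsApWeightPlus (α β p : ℝ) (w : ℝ → ℝ) : Prop :=
  (∀ θ, 0 ≤ w θ) ∧
    ∃ C : ℝ, ∀ a b : ℝ, 0 ≤ a → a ≤ b → b ≤ π →
      (∫⁻ θ in Ioo a b, ENNReal.ofReal (w θ) ∂(jacobiMeasurePlus α β)) *
          (∫⁻ θ in Ioo a b, ENNReal.ofReal (w θ ^ (-1 / (p - 1))) ∂(jacobiMeasurePlus α β)) ^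
            (p - 1) ≤
        ENNReal.ofReal C * jacobiMeasurePlus α β (Ioo a b) ^ p

/-- The Muckenhoupt class `(A_1^{α,β})⁺` on `(0,π)` w.r.t. `μ⁺_{α,β}`. -/
def IsA1WeightPlus (α β : ℝ) (w : ℝ → ℝ) : Prop :=
  (∀ θ, 0 ≤ w θ) ∧
    ∃ C : ℝ, ∀ a b : ℝ, 0 ≤ a → a ≤ b → b ≤ π →
      ∫⁻ θ in Ioo a b, ENNReal.ofReal (w θ) ∂(jacobiMeasurePlus α β) ≤
        ENNReal.ofReal C *
          essInf (fun θ => ENNReal.ofReal (w θ)) ((jacobiMeasurePlus α β).restrict (Ioo a b)) *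
          jacobiMeasurePlus α β (Ioo a b)

/-- The double power weight `w_{r,s}(θ) = |sin(θ/2)|^r (cos(θ/2))^s`. -/
def wrs (r s θ : ℝ) : ℝ := |Real.sin (θ / 2)| ^ r * Real.cos (θ / 2) ^ s


/-- The restricted Poisson semigroup `(H_t^{α,β})⁺`. -/
def restH (α β : ℝ) (f : ℝ → ℝ) (t θ : ℝ) : ℝ :=
  ∑' n : ℕ, Real.exp (-t * Real.sqrt (jLam α β n)) *
    (∫ φ, f φ * symPhi α β (2 * n) φ ∂(jacobiMeasurePlus α β)) * symPhi α β (2 * n) θ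

/-- The restricted Poisson semigroup `(H̃_t^{α,β})⁺`. -/
def restHtil (α β : ℝ) (f : ℝ → ℝ) (t θ : ℝ) : ℝ :=
  ∑' n : ℕ, Real.exp (-t * Real.sqrt (jLam α β (n + 1))) *
    (∫ φ, f φ * symPhi α β (2 * n + 1) φ ∂(jacobiMeasurePlus α β)) * symPhi α β (2 * n + 1) θ

/-- The restricted square function `(G_{M,N}^{α,β})⁺`. -/
def restG (α β : ℝ) (M N : ℕ) (f : ℝ → ℝ) (θ : ℝ) : ℝ≥0∞ :=
  (∫⁻ t in Ioi (0 : ℝ), ENNReal.ofReal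
      ((deriv^[M] (fun s => deltaEven α β N (fun θ' => restH α β f s θ') θ) t) ^ 2 *
        t ^ (2 * M + 2 * N - 1))) ^ (1 / 2 : ℝ)

/-- The restricted square function `(G̃_{M,N}^{α,β})⁺`. -/
def restGtil (α β : ℝ) (M N : ℕ) (f : ℝ → ℝ) (θ : ℝ) : ℝ≥0∞ :=
  (∫⁻ t in Ioi (0 : ℝ), ENNReal.ofReal
      ((deriv^[M] (fun s => deltaOdd α β N (fun θ' => restHtil α β f s θ') θ) t) ^ 2 *
        t ^ (2 * M + 2 * N - 1))) ^ (1 / 2 : ℝ)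


/-! ### Jacobi polynomials in the variable `z = (x-1)/2` -/

/-- Coefficients of the Jacobi polynomial in powers of `(x-1)/2`. -/
def jCo (α β : ℝ) (n m : ℕ) : ℝ :=
  (Real.Gamma (α + n + 1) * Real.Gamma (α + β + n + m + 1)) /
      ((m.factorial : ℝ) * ((n - m).factorial : ℝ) * Real.Gamma (α + β + n + 1) *
        Real.Gamma (α + m + 1))

def jQ (α β : ℝ) (n : ℕ) : Polynomial ℝ :=
  ∑ m ∈ Finset.range (n + 1), Polynomial.C (jCo α β n m) * Polynomial.X ^ m

lemma jQ_eval (α β : ℝ) (n : ℕ) (x : ℝ) :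
    (jQ α β n).eval ((x - 1) / 2) = jacobiP α β n x := by
  simp [jQ, jacobiP, Polynomial.eval_finsetSum, jCo]

lemma jQ_coeff (α β : ℝ) (n k : ℕ) :
    (jQ α β n).coeff k = if k ≤ n then jCo α β n k else 0 := by
  simp only [jQ, Polynomial.finsetSum_coeff, Polynomial.coeff_C_mul, Polynomial.coeff_X_pow]
  simp [Finset.sum_ite_eq]

lemma jQ_rec (α β : ℝ) (hα : -1 < α) (hβ : -1 < β) (n k : ℕ) :
    ((k : ℝ) + 1) * (k + α + 1) * (jQ α β n).coeff (k + 1) =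
      ((n : ℝ) - k) * (n + k + (α + β + 1)) * (jQ α β n).coeff k := by
  rw [jQ_coeff, jQ_coeff]
  rcases lt_trichotomy k n with h | h | h
  · rw [if_pos (by omega : k + 1 ≤ n), if_pos h.le]
    obtain ⟨d, rfl⟩ : ∃ d, n = k + 1 + d := ⟨n - (k + 1), by omega⟩
    have e1 : k + 1 + d - (k + 1) = d := by omega
    have e2 : k + 1 + d - k = d + 1 := by omega
    unfold jCo
    rw [e1, e2, Nat.factorial_succ, Nat.factorial_succ]
    have hk : (0 : ℝ) ≤ k := Nat.cast_nonneg k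
    have hd : (0 : ℝ) ≤ d := Nat.cast_nonneg d
    have g1 : Real.Gamma (α + β + ((k + 1 + d : ℕ) : ℝ) + ((k + 1 : ℕ) : ℝ) + 1) =
        (α + β + ((k + 1 + d : ℕ) : ℝ) + k + 1) *
          Real.Gamma (α + β + ((k + 1 + d : ℕ) : ℝ) + k + 1) := by
      rw [← Real.Gamma_add_one]
      · congr 1; push_cast; ring
      · push_cast; linarith
    have g2 : Real.Gamma (α + ((k + 1 : ℕ) : ℝ) + 1) = (α + k + 1) * Real.Gamma (α + k + 1) := by
      rw [← Real.Gamma_add_one]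
      · congr 1; push_cast; ring
      · linarith
    rw [g1, g2]
    have n1 : Real.Gamma (α + k + 1) ≠ 0 := (Real.Gamma_pos_of_pos (by linarith)).ne'
    have n2 : Real.Gamma (α + β + ((k + 1 + d : ℕ) : ℝ) + 1) ≠ 0 :=
      (Real.Gamma_pos_of_pos (by push_cast; linarith)).ne'
    have n3 : α + k + 1 ≠ 0 := by linarith
    have n4 : (k.factorial : ℝ) ≠ 0 := by positivity
    have n5 : (d.factorial : ℝ) ≠ 0 := by positivity
    have n6 : (k : ℝ) + 1 ≠ 0 := by positivity
    have n7 : (d : ℝ) + 1 ≠ 0 := by positivity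
    generalize Real.Gamma (α + β + ((k + 1 + d : ℕ) : ℝ) + k + 1) = A
    generalize Real.Gamma (α + ((k + 1 + d : ℕ) : ℝ) + 1) = B
    generalize Real.Gamma (α + β + ((k + 1 + d : ℕ) : ℝ) + 1) = D at *
    generalize Real.Gamma (α + k + 1) = E at *
    push_cast
    field_simp
    ring
  · subst h; simp
  · rw [if_neg (by omega), if_neg (by omega)]; simp

open Polynomial in
lemma jQ_ode (α β : ℝ) (hα : -1 < α) (hβ : -1 < β) (n : ℕ) :
    X * (1 + X) * derivative (derivative (jQ α β n)) +
      (C (α + 1) + C (α + β + 2) * X) * derivative (jQ α β n) -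
      C ((n : ℝ) * (n + (α + β + 1))) * jQ α β n = 0 := by
  have hr := jQ_rec α β hα hβ n
  generalize jQ α β n = Q at *
  have e : X * (1 + X) * derivative (derivative Q) +
      (C (α + 1) + C (α + β + 2) * X) * derivative Q -
      C ((n : ℝ) * (n + (α + β + 1))) * Q = X * derivative (derivative Q) +
      X * (X * derivative (derivative Q)) +
      (C (α + 1) * derivative Q + C (α + β + 2) * (X * derivative Q)) -
      C ((n : ℝ) * (n + (α + β + 1))) * Q := by ring
  rw [e]
  ext k
  have h := hr k
  rw [coeff_sub, coeff_add, coeff_add, coeff_add, coeff_C_mul, coeff_C_mul, coeff_C_mul]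
  rcases k with _ | _ | k
  · simp [coeff_derivative] at h ⊢; linarith
  · simp [coeff_derivative, coeff_X_mul] at h ⊢; linarith
  · simp [coeff_derivative, coeff_X_mul] at h ⊢; linarith

open Polynomial in
lemma jQ_deriv (α β : ℝ) (hα : -1 < α) (hβ : -1 < β) (n : ℕ) :
    derivative (jQ α β (n + 1)) = C ((n : ℝ) + 1 + (α + β + 1)) * jQ (α + 1) (β + 1) n := by
  ext k
  rw [coeff_derivative, coeff_C_mul, jQ_coeff, jQ_coeff]
  by_cases h : k ≤ n
  · rw [if_pos h, if_pos (by omega)]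
    unfold jCo
    have e1 : n + 1 - (k + 1) = n - k := by omega
    have hn : (0 : ℝ) ≤ n := Nat.cast_nonneg n
    have hk : (0 : ℝ) ≤ k := Nat.cast_nonneg k
    rw [e1, Nat.factorial_succ]
    have g1 : Real.Gamma (α + 1 + (β + 1) + n + 1) =
        (α + β + ((n + 1 : ℕ) : ℝ) + 1) * Real.Gamma (α + β + ((n + 1 : ℕ) : ℝ) + 1) := by
      rw [← Real.Gamma_add_one]
      · congr 1; push_cast; ring
      · push_cast; linarith
    have g2 : Real.Gamma (α + ((n + 1 : ℕ) : ℝ) + 1) = Real.Gamma (α + 1 + n + 1) := by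
      congr 1; push_cast; ring
    have g3 : Real.Gamma (α + ((k + 1 : ℕ) : ℝ) + 1) = Real.Gamma (α + 1 + k + 1) := by
      congr 1; push_cast; ring
    have g4 : Real.Gamma (α + β + ((n + 1 : ℕ) : ℝ) + ((k + 1 : ℕ) : ℝ) + 1) =
        Real.Gamma (α + 1 + (β + 1) + n + k + 1) := by
      congr 1; push_cast; ring
    rw [g1, g2, g3, g4]
    have n1 : Real.Gamma (α + 1 + k + 1) ≠ 0 := (Real.Gamma_pos_of_pos (by linarith)).ne'
    have n2 : Real.Gamma (α + β + ((n + 1 : ℕ) : ℝ) + 1) ≠ 0 :=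
      (Real.Gamma_pos_of_pos (by push_cast; linarith)).ne'
    have n3 : α + β + n + 1 + 1 ≠ 0 := by linarith
    have n4 : (k.factorial : ℝ) ≠ 0 := by positivity
    have n5 : ((n - k).factorial : ℝ) ≠ 0 := by positivity
    have n6 : (k : ℝ) + 1 ≠ 0 := by positivity
    generalize Real.Gamma (α + β + ((n + 1 : ℕ) : ℝ) + 1) = A at *
    generalize Real.Gamma (α + 1 + k + 1) = B at *
    have n7 : α + β + (n + 1) + 1 ≠ 0 := by linarith
    push_cast
    field_simp
    ring
  · rw [if_neg (by omega), if_neg h]; simp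

/-! ### The trigonometric polynomials -/

def jz (θ : ℝ) : ℝ := (Real.cos θ - 1) / 2

def pf (α β : ℝ) (n : ℕ) (θ : ℝ) : ℝ := (jQ α β n).eval (jz θ)

def pd (α β : ℝ) (n : ℕ) (θ : ℝ) : ℝ :=
  -(Real.sin θ / 2) * (Polynomial.derivative (jQ α β n)).eval (jz θ)

def jq (α β θ : ℝ) : ℝ :=
  (α + 1 / 2) * (Real.cos (θ / 2) / Real.sin (θ / 2)) - (β + 1 / 2) * Real.tan (θ / 2)

lemma hasDerivAt_jz (θ : ℝ) : HasDerivAt jz (-(Real.sin θ / 2)) θ := by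
  have := ((Real.hasDerivAt_cos θ).sub_const 1).div_const 2
  exact this.congr_deriv (by ring)

lemma continuous_jz : Continuous jz := by unfold jz; fun_prop

lemma continuous_pf (α β : ℝ) (n : ℕ) : Continuous (pf α β n) :=
  (jQ α β n).continuous.comp continuous_jz

lemma continuous_pd (α β : ℝ) (n : ℕ) : Continuous (pd α β n) := by
  unfold pd
  exact (by fun_prop : Continuous fun θ : ℝ => -(Real.sin θ / 2)).mul
    ((Polynomial.continuous _).comp continuous_jz)

lemma hasDerivAt_pf (α β : ℝ) (n : ℕ) (θ : ℝ) : HasDerivAt (pf α β n) (pd α β n θ) θ := by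
  have := ((jQ α β n).hasDerivAt (jz θ)).comp θ (hasDerivAt_jz θ)
  exact this.congr_deriv (by unfold pd; ring)

lemma sin_half_pos {θ : ℝ} (h : θ ∈ Ioo 0 π) : 0 < Real.sin (θ / 2) :=
  Real.sin_pos_of_pos_of_lt_pi (by linarith [h.1]) (by linarith [h.1, h.2])

lemma cos_half_pos {θ : ℝ} (h : θ ∈ Ioo 0 π) : 0 < Real.cos (θ / 2) :=
  Real.cos_pos_of_mem_Ioo ⟨by linarith [h.1, Real.pi_pos], by linarith [h.2]⟩

lemma sin_eq_half (θ : ℝ) : Real.sin θ = 2 * Real.sin (θ / 2) * Real.cos (θ / 2) := by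
  rw [← Real.sin_two_mul]; congr 1; ring

lemma cos_eq_half (θ : ℝ) : Real.cos θ = 1 - 2 * Real.sin (θ / 2) ^ 2 := by
  have : Real.cos θ = Real.cos (2 * (θ / 2)) := by congr 1; ring
  rw [this, Real.cos_two_mul, Real.cos_sq']; ring

lemma hasDerivAt_pd (α β : ℝ) (hα : -1 < α) (hβ : -1 < β) (n : ℕ) {θ : ℝ} (h : θ ∈ Ioo 0 π) :
    HasDerivAt (pd α β n)
      (-((n : ℝ) * (n + (α + β + 1))) * pf α β n θ - jq α β θ * pd α β n θ) θ := by
  have h1 := ((Polynomial.derivative (jQ α β n)).hasDerivAt (jz θ)).comp θ (hasDerivAt_jz θ)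
  have h2 := (((Real.hasDerivAt_sin θ).div_const 2).neg).mul h1
  refine h2.congr_deriv ?_
  have ode := congrArg (Polynomial.eval (jz θ)) (jQ_ode α β hα hβ n)
  simp only [Polynomial.eval_sub, Polynomial.eval_add, Polynomial.eval_mul, Polynomial.eval_X,
    Polynomial.eval_one, Polynomial.eval_C, Polynomial.eval_zero] at ode
  unfold pf pd jq
  simp only [Function.comp, Pi.neg_apply]
  have hS := (sin_half_pos h).ne'
  have hC := (cos_half_pos h).ne'
  have hsc := Real.sin_sq_add_cos_sq (θ / 2)
  have hz : jz θ = -Real.sin (θ / 2) ^ 2 := by unfold jz; rw [cos_eq_half]; ring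
  rw [Real.tan_eq_sin_div_cos, sin_eq_half θ, cos_eq_half θ]
  generalize Polynomial.eval (jz θ)
    (Polynomial.derivative (Polynomial.derivative (jQ α β n))) = y2 at *
  generalize Polynomial.eval (jz θ) (Polynomial.derivative (jQ α β n)) = y1 at *
  generalize Polynomial.eval (jz θ) (jQ α β n) = y0 at *
  rw [hz] at ode
  generalize Real.sin (θ / 2) = S at *
  generalize Real.cos (θ / 2) = D at *
  have hD : D ^ 2 = 1 - S ^ 2 := by linarith
  have e : ((α + 1 / 2) * (D / S) - (β + 1 / 2) * (S / D)) * (-(2 * S * D / 2) * y1) =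
      -((α + 1 / 2) * D ^ 2 - (β + 1 / 2) * S ^ 2) * y1 := by
    field_simp
  have e2 : -(2 * S * D / 2) * (y2 * -(2 * S * D / 2)) = S ^ 2 * D ^ 2 * y2 := by ring
  rw [e, e2, hD]
  linear_combination (-1) * ode

lemma pd_succ (α β : ℝ) (hα : -1 < α) (hβ : -1 < β) (n : ℕ) (θ : ℝ) :
    pd α β (n + 1) θ = -((n : ℝ) + 1 + (α + β + 1)) *
      (Real.sin θ / 2 * jacobiP (α + 1) (β + 1) n (Real.cos θ)) := by
  unfold pd
  rw [jQ_deriv α β hα hβ, Polynomial.eval_mul, Polynomial.eval_C, jz, jQ_eval]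
  ring

lemma pf_eq (α β : ℝ) (n : ℕ) (θ : ℝ) : pf α β n θ = jacobiP α β n (Real.cos θ) := by
  unfold pf; rw [jz, jQ_eval]

lemma pd_zero (α β : ℝ) (θ : ℝ) : pd α β 0 θ = 0 := by
  simp [pd, jQ]


/-! ### The measure -/

lemma measurable_jPsi (α β : ℝ) : Measurable (jPsi α β) := by
  unfold jPsi
  fun_prop

lemma jPsi_sq (α β : ℝ) {θ : ℝ} (h : θ ∈ Ioo 0 π) :
    jPsi α β θ ^ 2 = Real.sin (θ / 2) ^ (2 * α + 1) * Real.cos (θ / 2) ^ (2 * β + 1) := by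
  have hS := sin_half_pos h
  have hC := cos_half_pos h
  unfold jPsi
  rw [abs_of_pos hS, mul_pow, ← Real.rpow_natCast, ← Real.rpow_natCast, ← Real.rpow_mul hS.le,
    ← Real.rpow_mul hC.le]
  congr 2 <;> (push_cast; ring)

lemma jPsi_sq_pos (α β : ℝ) {θ : ℝ} (h : θ ∈ Ioo 0 π) : 0 < jPsi α β θ ^ 2 := by
  rw [jPsi_sq α β h]
  exact mul_pos (Real.rpow_pos_of_pos (sin_half_pos h) _) (Real.rpow_pos_of_pos (cos_half_pos h) _)

lemma mup_eq (α β : ℝ) : jacobiMeasurePlus α β =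
    (volume.restrict (Ioo 0 π)).withDensity fun θ => ENNReal.ofReal (jPsi α β θ ^ 2) := by
  unfold jacobiMeasurePlus jacobiMeasure
  rw [restrict_withDensity measurableSet_Ioo, Measure.restrict_restrict measurableSet_Ioo,
    inter_eq_left.mpr (Ioo_subset_Ioo_left (by linarith [Real.pi_pos]))]

lemma hasDerivAt_sinpow (c : ℝ) {θ : ℝ} (h : θ ∈ Ioo 0 π) :
    HasDerivAt (fun x => Real.sin (x / 2) ^ c)
      (c / 2 * Real.sin (θ / 2) ^ (c - 1) * Real.cos (θ / 2)) θ := by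
  have h1 : HasDerivAt (fun x : ℝ => x / 2) (1 / 2) θ := (hasDerivAt_id θ).div_const 2
  have h2 := (h1.sin).rpow_const (p := c) (Or.inl (sin_half_pos h).ne')
  exact h2.congr_deriv (by ring)

lemma hasDerivAt_cospow (c : ℝ) {θ : ℝ} (h : θ ∈ Ioo 0 π) :
    HasDerivAt (fun x => Real.cos (x / 2) ^ c)
      (-(c / 2 * Real.cos (θ / 2) ^ (c - 1) * Real.sin (θ / 2))) θ := by
  have h1 : HasDerivAt (fun x : ℝ => x / 2) (1 / 2) θ := (hasDerivAt_id θ).div_const 2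
  have h2 := (h1.cos).rpow_const (p := c) (Or.inl (cos_half_pos h).ne')
  exact h2.congr_deriv (by ring)

lemma hasDerivAt_weight (α β : ℝ) {θ : ℝ} (h : θ ∈ Ioo 0 π) :
    HasDerivAt (fun x => jPsi α β x ^ 2) (jq α β θ * jPsi α β θ ^ 2) θ := by
  have h1 := (hasDerivAt_sinpow (2 * α + 1) h).mul (hasDerivAt_cospow (2 * β + 1) h)
  have h2 : (fun x => jPsi α β x ^ 2) =ᶠ[nhds θ]
      fun x => Real.sin (x / 2) ^ (2 * α + 1) * Real.cos (x / 2) ^ (2 * β + 1) := by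
    filter_upwards [isOpen_Ioo.mem_nhds h] with x hx using jPsi_sq α β hx
  refine (h1.congr_of_eventuallyEq h2).congr_deriv ?_
  have hS := sin_half_pos h
  have hC := cos_half_pos h
  rw [jPsi_sq α β h, Real.rpow_sub_one hS.ne', Real.rpow_sub_one hC.ne', jq,
    Real.tan_eq_sin_div_cos]
  field_simp
  ring

lemma integrableOn_weight (α β : ℝ) (hα : -1 < α) (hβ : -1 < β) :
    IntegrableOn (fun θ => jPsi α β θ ^ 2) (Ioo 0 π) := by
  have hp := Real.pi_pos
  have c1 : Continuous fun x : ℝ => Real.sin (x / 2) ^ (2 * α + 2) :=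
    (by fun_prop : Continuous fun x : ℝ => Real.sin (x / 2)).rpow_const
      fun x => Or.inr (by linarith)
  have c2 : Continuous fun x : ℝ => -(Real.cos (x / 2) ^ (2 * β + 2)) :=
    ((by fun_prop : Continuous fun x : ℝ => Real.cos (x / 2)).rpow_const
      fun x => Or.inr (by linarith)).neg
  have i1 : IntegrableOn (fun θ => (2 * α + 2) / 2 * Real.sin (θ / 2) ^ (2 * α + 2 - 1) *
      Real.cos (θ / 2)) (Ioc 0 (π / 2)) := by
    refine intervalIntegral.integrableOn_deriv_of_nonneg c1.continuousOn
      (fun x hx => hasDerivAt_sinpow _ ⟨hx.1, by linarith [hx.2]⟩) (fun x hx => ?_)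
    have hx' : x ∈ Ioo 0 π := ⟨hx.1, by linarith [hx.2]⟩
    have := Real.rpow_pos_of_pos (sin_half_pos hx') (2 * α + 2 - 1)
    have := cos_half_pos hx'
    have : 0 < (2 * α + 2) / 2 := by linarith
    positivity
  have i2 : IntegrableOn (fun θ => (2 * β + 2) / 2 * Real.cos (θ / 2) ^ (2 * β + 2 - 1) *
      Real.sin (θ / 2)) (Ioc (π / 2) π) := by
    refine intervalIntegral.integrableOn_deriv_of_nonneg c2.continuousOn
      (fun x hx => ((hasDerivAt_cospow _ ⟨by linarith [hx.1], hx.2⟩).neg).congr_deriv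
        (neg_neg _)) (fun x hx => ?_)
    have hx' : x ∈ Ioo 0 π := ⟨by linarith [hx.1], hx.2⟩
    have := Real.rpow_pos_of_pos (cos_half_pos hx') (2 * β + 2 - 1)
    have := sin_half_pos hx'
    have : 0 < (2 * β + 2) / 2 := by linarith
    positivity
  have d1 : ContinuousOn (fun θ : ℝ => Real.cos (θ / 2) ^ (2 * β) / (α + 1)) (Icc 0 (π / 2)) := by
    refine ContinuousOn.div_const (ContinuousOn.rpow_const (by fun_prop) fun x hx => Or.inl ?_) _
    exact (Real.cos_pos_of_mem_Ioo ⟨by linarith [hx.1], by linarith [hx.2]⟩).ne'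
  have d2 : ContinuousOn (fun θ : ℝ => Real.sin (θ / 2) ^ (2 * α) / (β + 1)) (Icc (π / 2) π) := by
    refine ContinuousOn.div_const (ContinuousOn.rpow_const (by fun_prop) fun x hx => Or.inl ?_) _
    exact (Real.sin_pos_of_pos_of_lt_pi (by linarith [hx.1]) (by linarith [hx.2])).ne'
  rw [← integrableOn_Icc_iff_integrableOn_Ioc] at i1 i2
  have j1 := i1.mul_continuousOn d1 isCompact_Icc
  have j2 := i2.mul_continuousOn d2 isCompact_Icc
  have hsub : Ioo 0 π = Ioc 0 (π / 2) ∪ Ioo (π / 2) π :=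
    (Ioc_union_Ioo_eq_Ioo (by linarith) (by linarith)).symm
  rw [hsub]
  refine IntegrableOn.union ?_ ?_
  · refine (j1.mono_set Ioc_subset_Icc_self).congr_fun (fun θ hθ => ?_) measurableSet_Ioc
    have hx' : θ ∈ Ioo 0 π := ⟨hθ.1, by linarith [hθ.2]⟩
    have hC := cos_half_pos hx'
    have e : 2 * α + 2 - 1 = 2 * α + 1 := by ring
    have : α + 1 ≠ 0 := by linarith
    simp only
    rw [jPsi_sq α β hx', Real.rpow_add_one hC.ne', e]
    field_simp
  · refine (j2.mono_set Ioo_subset_Icc_self).congr_fun (fun θ hθ => ?_) measurableSet_Ioo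
    have hx' : θ ∈ Ioo 0 π := ⟨by linarith [hθ.1], hθ.2⟩
    have hS := sin_half_pos hx'
    have e : 2 * β + 2 - 1 = 2 * β + 1 := by ring
    have : β + 1 ≠ 0 := by linarith
    simp only
    rw [jPsi_sq α β hx', Real.rpow_add_one hS.ne', e]
    field_simp

lemma measurable_dens (α β : ℝ) : Measurable fun θ => ENNReal.ofReal (jPsi α β θ ^ 2) :=
  ((measurable_jPsi α β).pow_const 2).ennreal_ofReal

lemma integral_mup (α β : ℝ) (g : ℝ → ℝ) :
    ∫ θ, g θ ∂(jacobiMeasurePlus α β) = ∫ θ in Ioo 0 π, g θ * jPsi α β θ ^ 2 := by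
  rw [mup_eq, integral_withDensity_eq_integral_toReal_smul (measurable_dens α β)
    (Filter.Eventually.of_forall fun _ => ENNReal.ofReal_lt_top)]
  congr 1
  ext θ
  rw [ENNReal.toReal_ofReal (sq_nonneg _), smul_eq_mul, mul_comm]

lemma finite_mup (α β : ℝ) (hα : -1 < α) (hβ : -1 < β) :
    IsFiniteMeasure (jacobiMeasurePlus α β) := by
  rw [mup_eq]
  exact isFiniteMeasure_withDensity_ofReal (integrableOn_weight α β hα hβ).2

instance sfinite_mup (α β : ℝ) : SFinite (jacobiMeasurePlus α β) := by
  rw [mup_eq]; infer_instance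

lemma ae_mup (α β : ℝ) : ∀ᵐ θ ∂(jacobiMeasurePlus α β), θ ∈ Ioo 0 π := by
  unfold jacobiMeasurePlus
  exact ae_restrict_mem measurableSet_Ioo

lemma mup_Icc_ne_zero (α β : ℝ) {a b : ℝ} (ha : 0 < a) (hab : a < b) (hb : b < π) :
    jacobiMeasurePlus α β (Icc a b) ≠ 0 := by
  have hsub : Icc a b ⊆ Ioo 0 π := fun x hx => ⟨by linarith [hx.1], by linarith [hx.2]⟩
  rw [mup_eq, withDensity_apply _ measurableSet_Icc, Measure.restrict_restrict measurableSet_Icc,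
    inter_eq_left.mpr hsub]
  refine (((setLIntegral_pos_iff (measurable_dens α β)).2 ?_)).ne'
  have : (Function.support fun θ => ENNReal.ofReal (jPsi α β θ ^ 2)) ∩ Icc a b = Icc a b := by
    refine inter_eq_right.mpr fun x hx => ?_
    simpa using (jPsi_sq_pos α β (hsub hx)).ne'
  rw [this]
  simp [hab]

lemma integrable_mup_cont (α β : ℝ) (hα : -1 < α) (hβ : -1 < β) {g : ℝ → ℝ} (hg : Continuous g) :
    IntegrableOn (fun θ => g θ * jPsi α β θ ^ 2) (Ioo 0 π) := by
  have h1 := integrableOn_weight α β hα hβ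
  rw [← integrableOn_Icc_iff_integrableOn_Ioo] at h1 ⊢
  have := h1.mul_continuousOn hg.continuousOn isCompact_Icc
  simpa only [mul_comm] using this

/-- Integration by parts. -/
lemma ibp (α β : ℝ) (hα : -1 < α) (hβ : -1 < β) (n m : ℕ) :
    ∫ θ, pd α β n θ * pd α β m θ ∂(jacobiMeasurePlus α β) =
      ((n : ℝ) * (n + (α + β + 1))) * ∫ θ, pf α β n θ * pf α β m θ ∂(jacobiMeasurePlus α β) := by
  set K : ℝ := (n : ℝ) * (n + (α + β + 1)) with hK
  rw [integral_mup, integral_mup]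
  have i1 := integrable_mup_cont α β hα hβ ((continuous_pd α β n).mul (continuous_pd α β m))
  have i2 := integrable_mup_cont α β hα hβ ((continuous_pf α β n).mul (continuous_pf α β m))
  simp only [Pi.mul_apply] at i1 i2
  set V : ℝ → ℝ := fun θ => -(Real.sin (θ / 2) ^ (2 * α + 2) * Real.cos (θ / 2) ^ (2 * β + 2)) *
    (Polynomial.derivative (jQ α β n)).eval (jz θ) * pf α β m θ with hV
  have hVc : Continuous V := by
    have c1 : Continuous fun x : ℝ => Real.sin (x / 2) ^ (2 * α + 2) :=
      (by fun_prop : Continuous fun x : ℝ => Real.sin (x / 2)).rpow_const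
        fun x => Or.inr (by linarith)
    have c2 : Continuous fun x : ℝ => Real.cos (x / 2) ^ (2 * β + 2) :=
      ((by fun_prop : Continuous fun x : ℝ => Real.cos (x / 2)).rpow_const
        fun x => Or.inr (by linarith))
    exact (((c1.mul c2).neg).mul ((Polynomial.continuous _).comp continuous_jz)).mul
      (continuous_pf α β m)
  have hVe : ∀ θ ∈ Ioo 0 π, V θ = jPsi α β θ ^ 2 * pd α β n θ * pf α β m θ := by
    intro θ hθ
    have hS := sin_half_pos hθ
    have hC := cos_half_pos hθ
    have e1 : 2 * α + 2 = (2 * α + 1) + 1 := by ring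
    have e2 : 2 * β + 2 = (2 * β + 1) + 1 := by ring
    simp only [hV, pd]
    rw [jPsi_sq α β hθ, e1, e2, Real.rpow_add_one hS.ne', Real.rpow_add_one hC.ne', sin_eq_half θ]
    ring
  have hVd : ∀ θ ∈ Ioo 0 π, HasDerivAt V
      (pd α β n θ * pd α β m θ * jPsi α β θ ^ 2 -
        K * (pf α β n θ * pf α β m θ * jPsi α β θ ^ 2)) θ := by
    intro θ hθ
    have h1 := ((hasDerivAt_weight α β hθ).mul (hasDerivAt_pd α β hα hβ n hθ)).mul
      (hasDerivAt_pf α β m θ)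
    refine (h1.congr_of_eventuallyEq ?_).congr_deriv ?_
    · filter_upwards [isOpen_Ioo.mem_nhds hθ] with x hx using hVe x hx
    · simp only [Pi.mul_apply]; ring
  have hI : IntegrableOn (fun θ => pd α β n θ * pd α β m θ * jPsi α β θ ^ 2 -
        K * (pf α β n θ * pf α β m θ * jPsi α β θ ^ 2)) (Ioo 0 π) := i1.sub (i2.const_mul K)
  have hf := intervalIntegral.integral_eq_sub_of_hasDerivAt_of_le Real.pi_pos.le
    hVc.continuousOn hVd ((intervalIntegrable_iff_integrableOn_Ioo_of_le Real.pi_pos.le).2 hI)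
  have v0 : V 0 = 0 := by
    simp only [hV]
    rw [zero_div, Real.sin_zero, Real.zero_rpow (by linarith)]
    simp
  have v1 : V π = 0 := by
    simp only [hV]
    rw [Real.cos_pi_div_two, Real.zero_rpow (by linarith)]
    simp
  rw [v0, v1, sub_zero, intervalIntegral.integral_of_le Real.pi_pos.le,
    integral_Ioc_eq_integral_Ioo, integral_sub i1 (i2.const_mul K), integral_const_mul] at hf
  exact sub_eq_zero.mp hf

lemma pf_orth (α β : ℝ) (hα : -1 < α) (hβ : -1 < β) {n m : ℕ} (h : n ≠ m) :
    ∫ θ, pf α β n θ * pf α β m θ ∂(jacobiMeasurePlus α β) = 0 := by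
  have h1 := ibp α β hα hβ n m
  have h2 := ibp α β hα hβ m n
  simp only [mul_comm (pd α β m _), mul_comm (pf α β m _)] at h2
  rw [h1] at h2
  have h3 : (((n : ℝ) - m) * (n + m + (α + β + 1))) *
      ∫ θ, pf α β n θ * pf α β m θ ∂(jacobiMeasurePlus α β) = 0 := by linear_combination h2
  rcases mul_eq_zero.mp h3 with h4 | h4
  · exfalso
    rcases mul_eq_zero.mp h4 with h5 | h5
    · exact h (by exact_mod_cast sub_eq_zero.mp h5)
    · have : 1 ≤ n + m := by omega
      have : (1 : ℝ) ≤ n + m := by exact_mod_cast this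
      linarith
  · exact h4

lemma pd_orth (α β : ℝ) (hα : -1 < α) (hβ : -1 < β) {n m : ℕ} (h : n ≠ m) :
    ∫ θ, pd α β n θ * pd α β m θ ∂(jacobiMeasurePlus α β) = 0 := by
  rw [ibp α β hα hβ, pf_orth α β hα hβ h, mul_zero]


/-! ### Orthogonal systems, Bessel inequality -/

lemma integrable_cont (α β : ℝ) (hα : -1 < α) (hβ : -1 < β) {g : ℝ → ℝ} (hg : Continuous g) :
    Integrable g (jacobiMeasurePlus α β) := by
  rw [mup_eq, integrable_withDensity_iff (measurable_dens α β)
    (Filter.Eventually.of_forall fun _ => ENNReal.ofReal_lt_top)]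
  refine (integrable_mup_cont α β hα hβ hg).congr (Filter.Eventually.of_forall fun θ => ?_)
  simp only
  rw [ENNReal.toReal_ofReal (sq_nonneg _)]

lemma orth_sum (α β : ℝ) (hα : -1 < α) (hβ : -1 < β) {g : ℕ → ℝ → ℝ}
    (hg : ∀ n, Continuous (g n))
    (ho : ∀ n m, n ≠ m → ∫ θ, g n θ * g m θ ∂(jacobiMeasurePlus α β) = 0)
    (r : ℕ → ℝ) (K : ℕ) :
    ∫ θ, (∑ n ∈ Finset.range K, r n * g n θ) ^ 2 ∂(jacobiMeasurePlus α β) =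
      ∑ n ∈ Finset.range K, r n ^ 2 * ∫ θ, g n θ ^ 2 ∂(jacobiMeasurePlus α β) := by
  have hi : ∀ n m, Integrable (fun θ => r n * r m * (g n θ * g m θ)) (jacobiMeasurePlus α β) :=
    fun n m => (integrable_cont α β hα hβ ((hg n).mul (hg m))).const_mul _
  have e : ∀ θ, (∑ n ∈ Finset.range K, r n * g n θ) ^ 2 =
      ∑ n ∈ Finset.range K, ∑ m ∈ Finset.range K, r n * r m * (g n θ * g m θ) := by
    intro θ
    rw [sq, Finset.sum_mul_sum]
    refine Finset.sum_congr rfl fun n _ => Finset.sum_congr rfl fun m _ => by ring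
  simp_rw [e]
  rw [integral_finsetSum _ fun n _ => integrable_finsetSum _ fun m _ => hi n m]
  refine Finset.sum_congr rfl fun n hn => ?_
  rw [integral_finsetSum _ fun m _ => hi n m]
  simp_rw [integral_const_mul]
  rw [Finset.sum_eq_single n]
  · congr 1
    · ring
    · simp_rw [sq]
  · intro m _ hm
    rw [ho n m hm.symm, mul_zero]
  · intro h; exact absurd hn h

lemma bessel (α β : ℝ) (hα : -1 < α) (hβ : -1 < β) {g : ℕ → ℝ → ℝ}
    (hg : ∀ n, Continuous (g n))
    (ho : ∀ n m, n ≠ m → ∫ θ, g n θ * g m θ ∂(jacobiMeasurePlus α β) = 0)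
    (hn : ∀ n, ∫ θ, g n θ ^ 2 ∂(jacobiMeasurePlus α β) ≤ 1)
    {f : ℝ → ℝ} (hf : Measurable f)
    (hfi : Integrable (fun θ => f θ ^ 2) (jacobiMeasurePlus α β)) (K : ℕ) :
    ∑ n ∈ Finset.range K, (∫ θ, f θ * g n θ ∂(jacobiMeasurePlus α β)) ^ 2 ≤
      ∫ θ, f θ ^ 2 ∂(jacobiMeasurePlus α β) := by
  set c : ℕ → ℝ := fun n => ∫ θ, f θ * g n θ ∂(jacobiMeasurePlus α β) with hc
  have hfg : ∀ n, Integrable (fun θ => f θ * g n θ) (jacobiMeasurePlus α β) := by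
    intro n
    have h2 : Integrable (fun θ => f θ ^ 2 + g n θ ^ 2) (jacobiMeasurePlus α β) :=
      hfi.add (integrable_cont α β hα hβ ((hg n).pow 2))
    refine h2.mono' (hf.mul (hg n).measurable).aestronglyMeasurable
      (Filter.Eventually.of_forall fun θ => ?_)
    rw [Real.norm_eq_abs, abs_le]
    constructor <;> nlinarith [sq_nonneg (f θ + g n θ), sq_nonneg (f θ - g n θ)]
  have hS : Continuous fun θ => ∑ n ∈ Finset.range K, c n * g n θ :=
    continuous_finsetSum _ fun n _ => continuous_const.mul (hg n)
  have h0 : 0 ≤ ∫ θ, (f θ - ∑ n ∈ Finset.range K, c n * g n θ) ^ 2 ∂(jacobiMeasurePlus α β) :=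
    integral_nonneg fun θ => sq_nonneg _
  have e : ∀ θ, (f θ - ∑ n ∈ Finset.range K, c n * g n θ) ^ 2 = f θ ^ 2 -
      ∑ n ∈ Finset.range K, 2 * c n * (f θ * g n θ) +
      (∑ n ∈ Finset.range K, c n * g n θ) ^ 2 := by
    intro θ
    have : ∑ n ∈ Finset.range K, 2 * c n * (f θ * g n θ) =
        2 * f θ * ∑ n ∈ Finset.range K, c n * g n θ := by
      rw [Finset.mul_sum]; refine Finset.sum_congr rfl fun n _ => by ring
    rw [this]; ring
  have hI : Integrable (fun θ => ∑ n ∈ Finset.range K, 2 * c n * (f θ * g n θ))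
      (jacobiMeasurePlus α β) := integrable_finsetSum _ fun n _ => (hfg n).const_mul _
  simp_rw [e] at h0
  have hI1 : Integrable (fun θ => f θ ^ 2 - ∑ n ∈ Finset.range K, 2 * c n * (f θ * g n θ))
      (jacobiMeasurePlus α β) := hfi.sub hI
  have hI2 : Integrable (fun θ => (∑ n ∈ Finset.range K, c n * g n θ) ^ 2)
      (jacobiMeasurePlus α β) := integrable_cont α β hα hβ (hS.pow 2)
  rw [integral_add hI1 hI2, integral_sub hfi hI,
    orth_sum α β hα hβ hg ho, integral_finsetSum _ fun n _ => (hfg n).const_mul _] at h0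
  simp_rw [integral_const_mul] at h0
  have h3 : ∑ n ∈ Finset.range K, c n ^ 2 * ∫ θ, g n θ ^ 2 ∂(jacobiMeasurePlus α β) ≤
      ∑ n ∈ Finset.range K, c n ^ 2 :=
    Finset.sum_le_sum fun n _ => mul_le_of_le_one_right (sq_nonneg _) (hn n)
  have h4 : ∑ n ∈ Finset.range K, 2 * c n * ∫ θ, f θ * g n θ ∂(jacobiMeasurePlus α β) =
      2 * ∑ n ∈ Finset.range K, c n ^ 2 := by
    rw [Finset.mul_sum]; refine Finset.sum_congr rfl fun n _ => by rw [hc]; ring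
  rw [h4] at h0
  linarith

/-! ### Time integrals -/

lemma time_int {κ ℓ c : ℝ} (hκ : 0 ≤ κ) (hκℓ : κ ≤ ℓ) {M N : ℕ} (hMN : 0 < M + N) :
    ∫⁻ t in Ioi (0 : ℝ), ENNReal.ofReal
      ((Real.exp (-t * ℓ) * ((-ℓ) ^ M * (c * (-κ) ^ N))) ^ 2 * t ^ (2 * M + 2 * N - 1)) ≤
      ENNReal.ofReal (c ^ 2 * Real.Gamma (2 * M + 2 * N)) := by
  rcases (hκ.trans hκℓ).eq_or_lt with h | h
  · have hk : κ = 0 := le_antisymm (by linarith) hκ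
    have hz : (-ℓ) ^ M * (c * (-κ) ^ N) = 0 := by
      rw [hk, ← h, neg_zero]
      rcases Nat.eq_zero_or_pos M with hM | hM
      · rw [zero_pow (by omega : N ≠ 0)]; ring
      · rw [zero_pow hM.ne']; ring
    simp [hz]
  · have hLpos : (0 : ℝ) < 2 * M + 2 * N := by
      have : (0 : ℝ) < (M + N : ℕ) := by exact_mod_cast hMN
      push_cast at this; linarith
    have hInt0 := Real.integral_rpow_mul_exp_neg_mul_Ioi hLpos (by linarith : 0 < 2 * ℓ)
    have hG := Real.Gamma_pos_of_pos hLpos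
    have hval : 0 < (1 / (2 * ℓ)) ^ (2 * (M : ℝ) + 2 * N) * Real.Gamma (2 * M + 2 * N) := by
      positivity
    have hi : Integrable (fun t : ℝ => t ^ (2 * (M : ℝ) + 2 * N - 1) * Real.exp (-(2 * ℓ * t)))
        (volume.restrict (Ioi 0)) := by
      by_contra hcon
      rw [integral_undef hcon] at hInt0
      linarith
    have hi2 := hi.const_mul (c ^ 2 * ℓ ^ (2 * M + 2 * N))
    calc _ ≤ ∫⁻ t in Ioi (0 : ℝ), ENNReal.ofReal (c ^ 2 * ℓ ^ (2 * M + 2 * N) *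
          (t ^ (2 * (M : ℝ) + 2 * N - 1) * Real.exp (-(2 * ℓ * t)))) := by
          refine setLIntegral_mono_ae' measurableSet_Ioi (Filter.Eventually.of_forall ?_)
          intro t ht
          refine ENNReal.ofReal_le_ofReal ?_
          have ht' : (0 : ℝ) < t := ht
          have e1 : t ^ (2 * (M : ℝ) + 2 * N - 1) = t ^ (2 * M + 2 * N - 1) := by
            rw [← Real.rpow_natCast]
            congr 1
            rw [Nat.cast_sub (by omega)]
            push_cast; ring
          have e2 : Real.exp (-(2 * ℓ * t)) = Real.exp (-t * ℓ) ^ 2 := by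
            rw [← Real.exp_nat_mul]; congr 1; push_cast; ring
          rw [e1, e2]
          have e3 : (Real.exp (-t * ℓ) * ((-ℓ) ^ M * (c * (-κ) ^ N))) ^ 2 * t ^ (2 * M + 2 * N - 1) =
              c ^ 2 * (ℓ ^ (2 * M) * κ ^ (2 * N)) *
                (t ^ (2 * M + 2 * N - 1) * Real.exp (-t * ℓ) ^ 2) := by
            rw [mul_pow, mul_pow, mul_pow, ← pow_mul, ← pow_mul, mul_comm M 2, mul_comm N 2,
              Even.neg_pow ⟨M, by ring⟩, Even.neg_pow ⟨N, by ring⟩]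
            ring
          rw [e3, pow_add]
          gcongr
      _ = ENNReal.ofReal (c ^ 2 * ℓ ^ (2 * M + 2 * N) *
            ((1 / (2 * ℓ)) ^ (2 * (M : ℝ) + 2 * N) * Real.Gamma (2 * M + 2 * N))) := by
          rw [← ofReal_integral_eq_lintegral_ofReal hi2, integral_const_mul, hInt0]
          rw [Filter.EventuallyLE, ae_restrict_iff' measurableSet_Ioi]
          refine Filter.Eventually.of_forall fun t ht => ?_
          have ht' : (0 : ℝ) < t := ht
          simp only [Pi.zero_apply]
          positivity
      _ ≤ _ := by
          refine ENNReal.ofReal_le_ofReal ?_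
          have e1 : (1 / (2 * ℓ)) ^ (2 * (M : ℝ) + 2 * N) = (1 / (2 * ℓ)) ^ (2 * M + 2 * N) := by
            rw [← Real.rpow_natCast]
            congr 1
            push_cast; ring
          rw [e1]
          have e2 : c ^ 2 * ℓ ^ (2 * M + 2 * N) *
            ((1 / (2 * ℓ)) ^ (2 * M + 2 * N) * Real.Gamma (2 * M + 2 * N)) =
            (c ^ 2 * Real.Gamma (2 * M + 2 * N)) * (1 / 2) ^ (2 * M + 2 * N) := by
            have : ℓ * (1 / (2 * ℓ)) = 1 / 2 := by field_simp
            rw [← this, mul_pow]; ring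
          rw [e2]
          exact mul_le_of_le_one_right (by positivity)
            (pow_le_one₀ (by norm_num) (by norm_num))

/-! ### Fatou argument -/

lemma main_est (α β : ℝ) (hα : -1 < α) (hβ : -1 < β) {g : ℕ → ℝ → ℝ}
    (hg : ∀ n, Continuous (g n))
    (ho : ∀ n m, n ≠ m → ∫ θ, g n θ * g m θ ∂(jacobiMeasurePlus α β) = 0)
    (hn : ∀ n, ∫ θ, g n θ ^ 2 ∂(jacobiMeasurePlus α β) ≤ 1)
    {κ ℓ c : ℕ → ℝ} (hκ : ∀ n, 0 ≤ κ n) (hκℓ : ∀ n, κ n ≤ ℓ n) {M N : ℕ} (hMN : 0 < M + N)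
    {A : ℝ} (hA : ∀ K, ∑ n ∈ Finset.range K, c n ^ 2 ≤ A) (h : ℝ → ℝ → ℝ)
    (hh : ∀ θ ∈ Ioo 0 π, ∀ t > 0,
      HasSum (fun n => Real.exp (-t * ℓ n) * ((-ℓ n) ^ M * (c n * (-κ n) ^ N)) * g n θ) (h θ t)) :
    ∫⁻ θ, (∫⁻ t in Ioi (0 : ℝ), ENNReal.ofReal (h θ t ^ 2 * t ^ (2 * M + 2 * N - 1)))
      ∂(jacobiMeasurePlus α β) ≤ ENNReal.ofReal (A * Real.Gamma (2 * M + 2 * N)) := by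
  set r : ℕ → ℝ → ℝ := fun n t => Real.exp (-t * ℓ n) * ((-ℓ n) ^ M * (c n * (-κ n) ^ N)) with hr
  have hrc : ∀ n, Continuous (r n) := fun n => by simp only [hr]; fun_prop
  set p := 2 * M + 2 * N - 1 with hp
  set H : ℕ → ℝ → ℝ → ℝ≥0∞ := fun K θ t =>
    ENNReal.ofReal ((∑ n ∈ Finset.range K, r n t * g n θ) ^ 2 * t ^ p) with hH
  have hHm : ∀ K, Measurable (Function.uncurry (H K)) := by
    intro K
    have : Continuous (Function.uncurry fun θ t =>
        (∑ n ∈ Finset.range K, r n t * g n θ) ^ 2 * t ^ p) := by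
      refine ((continuous_finsetSum _ fun n _ => ?_).pow 2).mul (continuous_snd.pow p)
      exact ((hrc n).comp continuous_snd).mul ((hg n).comp continuous_fst)
    exact this.measurable.ennreal_ofReal
  have hG : 0 < Real.Gamma (2 * M + 2 * N) := by
    refine Real.Gamma_pos_of_pos ?_
    have : (0 : ℝ) < (M + N : ℕ) := by exact_mod_cast hMN
    push_cast at this; linarith
  have hfin : ∀ K, ∫⁻ θ, (∫⁻ t in Ioi (0 : ℝ), H K θ t) ∂(jacobiMeasurePlus α β) ≤
      ENNReal.ofReal (A * Real.Gamma (2 * M + 2 * N)) := by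
    intro K
    rw [lintegral_lintegral_swap (hHm K).aemeasurable]
    calc _ ≤ ∫⁻ t in Ioi (0 : ℝ), ∑ n ∈ Finset.range K, ENNReal.ofReal (r n t ^ 2 * t ^ p) := by
          refine setLIntegral_mono_ae' measurableSet_Ioi (Filter.Eventually.of_forall ?_)
          intro t ht
          have ht' : (0 : ℝ) < t := ht
          have hc : Continuous fun θ => (∑ n ∈ Finset.range K, r n t * g n θ) ^ 2 * t ^ p :=
            ((continuous_finsetSum _ fun n _ => continuous_const.mul (hg n)).pow 2).mul
              continuous_const
          simp only [hH]
          rw [← ofReal_integral_eq_lintegral_ofReal (integrable_cont α β hα hβ hc)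
            (Filter.Eventually.of_forall fun θ => by simp only [Pi.zero_apply]; positivity),
            integral_mul_const, orth_sum α β hα hβ hg ho (fun n => r n t),
            ← ENNReal.ofReal_sum_of_nonneg (fun n _ => by positivity), ← Finset.sum_mul]
          refine ENNReal.ofReal_le_ofReal (mul_le_mul_of_nonneg_right ?_ (by positivity))
          exact Finset.sum_le_sum fun n _ => mul_le_of_le_one_right (sq_nonneg _) (hn n)
      _ = ∑ n ∈ Finset.range K, ∫⁻ t in Ioi (0 : ℝ), ENNReal.ofReal (r n t ^ 2 * t ^ p) := by
          rw [lintegral_finsetSum]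
          intro n _
          exact (((hrc n).pow 2).mul (continuous_id.pow p)).measurable.ennreal_ofReal
      _ ≤ ∑ n ∈ Finset.range K, ENNReal.ofReal (c n ^ 2 * Real.Gamma (2 * M + 2 * N)) :=
          Finset.sum_le_sum fun n _ => time_int (hκ n) (hκℓ n) hMN
      _ = ENNReal.ofReal (∑ n ∈ Finset.range K, c n ^ 2 * Real.Gamma (2 * M + 2 * N)) := by
          rw [ENNReal.ofReal_sum_of_nonneg]
          intro n _; positivity
      _ ≤ _ := by
          rw [← Finset.sum_mul]
          exact ENNReal.ofReal_le_ofReal (mul_le_mul_of_nonneg_right (hA K) hG.le)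
  have hlim : ∀ θ ∈ Ioo 0 π, ∀ t ∈ Ioi (0 : ℝ), ENNReal.ofReal (h θ t ^ 2 * t ^ p) =
      Filter.liminf (fun K => H K θ t) Filter.atTop := by
    intro θ hθ t ht
    refine (Filter.Tendsto.liminf_eq ?_).symm
    exact ENNReal.tendsto_ofReal ((((hh θ hθ t ht).tendsto_sum_nat).pow 2).mul_const _)
  clear_value H
  have hm1 : ∀ θ K, Measurable (H K θ) := fun θ K => (hHm K).of_uncurry_left
  have hm2 : ∀ K, Measurable fun θ => ∫⁻ t in Ioi (0 : ℝ), H K θ t :=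
    fun K => (hHm K).lintegral_prod_right'
  have s1 : ∫⁻ θ, (∫⁻ t in Ioi (0 : ℝ), ENNReal.ofReal (h θ t ^ 2 * t ^ p))
      ∂(jacobiMeasurePlus α β) ≤
      ∫⁻ θ, Filter.liminf (fun K => ∫⁻ t in Ioi (0 : ℝ), H K θ t) Filter.atTop
        ∂(jacobiMeasurePlus α β) := by
    refine lintegral_mono_ae ?_
    filter_upwards [ae_mup α β] with θ hθ
    rw [setLIntegral_congr_fun measurableSet_Ioi (hlim θ hθ)]
    exact lintegral_liminf_le (hm1 θ)
  have s2 := lintegral_liminf_le (μ := jacobiMeasurePlus α β) (u := Filter.atTop) hm2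
  refine s1.trans (s2.trans ?_)
  refine Filter.liminf_le_of_le (by isBoundedDefault) fun b hb => ?_
  obtain ⟨K, hK⟩ := hb.exists
  exact hK.trans (hfin K)


/-! ### Coupled systems -/

/-- A pair of orthogonal systems intertwined by `δ` and `δ*`. -/
structure JPair (α β : ℝ) (κ ℓ : ℕ → ℝ) (e o : ℕ → ℝ → ℝ) : Prop where
  de : ∀ n, ∀ θ ∈ Ioo 0 π, HasDerivAt (e n) (-κ n * o n θ) θ
  dd : ∀ n, ∀ θ ∈ Ioo 0 π, HasDerivAt (o n) (κ n * e n θ - jq α β θ * o n θ) θ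
  ce : ∀ n, Continuous (e n)
  co : ∀ n, Continuous (o n)
  oe : ∀ n m, n ≠ m → ∫ θ, e n θ * e m θ ∂(jacobiMeasurePlus α β) = 0
  oo : ∀ n m, n ≠ m → ∫ θ, o n θ * o m θ ∂(jacobiMeasurePlus α β) = 0
  ne : ∀ n, ∫ θ, e n θ ^ 2 ∂(jacobiMeasurePlus α β) ≤ 1
  no : ∀ n, ∫ θ, o n θ ^ 2 ∂(jacobiMeasurePlus α β) ≤ 1
  kpos : ∀ n, 0 ≤ κ n
  kle : ∀ n, κ n ≤ ℓ n
  lbd : ∃ B : ℝ, 0 ≤ B ∧ ∀ n : ℕ, (n : ℝ) - B ≤ ℓ n ∧ ℓ n ≤ B * (n + 1)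

lemma continuousOn_jq (α β : ℝ) : ContinuousOn (jq α β) (Ioo 0 π) := by
  have h : ContinuousOn (fun θ : ℝ => (α + 1 / 2) * (Real.cos (θ / 2) / Real.sin (θ / 2)) -
      (β + 1 / 2) * (Real.sin (θ / 2) / Real.cos (θ / 2))) (Ioo 0 π) := by
    refine ContinuousOn.sub ?_ ?_
    · refine continuousOn_const.mul (ContinuousOn.div (by fun_prop) (by fun_prop) ?_)
      exact fun θ hθ => (sin_half_pos hθ).ne'
    · refine continuousOn_const.mul (ContinuousOn.div (by fun_prop) (by fun_prop) ?_)
      exact fun θ hθ => (cos_half_pos hθ).ne'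
  refine h.congr fun θ _ => ?_
  simp only [jq, Real.tan_eq_sin_div_cos]

lemma jq_bdd (α β : ℝ) {a b : ℝ} (ha : 0 < a) (hb : b < π) :
    ∃ Q : ℝ, 0 ≤ Q ∧ ∀ x ∈ Icc a b, |jq α β x| ≤ Q := by
  have hsub : Icc a b ⊆ Ioo 0 π := fun x hx => ⟨by linarith [hx.1], by linarith [hx.2]⟩
  obtain ⟨Q, hQ⟩ := isCompact_Icc.exists_bound_of_continuousOn ((continuousOn_jq α β).mono hsub)
  refine ⟨max Q 0, le_max_right _ _, fun x hx => ?_⟩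
  exact (by simpa using hQ x hx : |jq α β x| ≤ Q).trans (le_max_left _ _)

lemma JPair.energy {α β : ℝ} {κ ℓ : ℕ → ℝ} {e o : ℕ → ℝ → ℝ} (P : JPair α β κ ℓ e o)
    {a b Q : ℝ} (ha : 0 < a) (hb : b < π) (hQ0 : 0 ≤ Q) (hQ : ∀ x ∈ Icc a b, |jq α β x| ≤ Q)
    (n : ℕ) {x y : ℝ} (hx : x ∈ Icc a b) (hy : y ∈ Icc a b) :
    e n x ^ 2 + o n x ^ 2 ≤ Real.exp (2 * Q * (b - a)) * (e n y ^ 2 + o n y ^ 2) := by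
  have hsub : Icc a b ⊆ Ioo 0 π := fun x hx => ⟨by linarith [hx.1], by linarith [hx.2]⟩
  set E : ℝ → ℝ := fun x => e n x ^ 2 + o n x ^ 2 with hE
  have hE0 : ∀ x, 0 ≤ E x := fun x => by simp only [hE]; positivity
  have hEd : ∀ x ∈ Icc a b, HasDerivAt E (-2 * jq α β x * o n x ^ 2) x := by
    intro x hx
    have h1 := ((P.de n x (hsub hx)).pow 2).add ((P.dd n x (hsub hx)).pow 2)
    refine h1.congr_deriv ?_
    push_cast; ring
  have hFd : ∀ c : ℝ, ∀ x ∈ Icc a b, HasDerivAt (fun x => E x * Real.exp (c * x))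
      ((-2 * jq α β x * o n x ^ 2 + c * E x) * Real.exp (c * x)) x := by
    intro c x hx
    have h2 : HasDerivAt (fun x : ℝ => c * x) c x := by simpa using (hasDerivAt_id x).const_mul c
    refine ((hEd x hx).mul h2.exp).congr_deriv ?_
    ring
  have hb1 : ∀ x ∈ Icc a b, |2 * jq α β x * o n x ^ 2| ≤ 2 * Q * E x := by
    intro x hx
    rw [abs_mul, abs_mul, abs_two, abs_of_nonneg (sq_nonneg (o n x))]
    have : o n x ^ 2 ≤ E x := by simp only [hE]; nlinarith [sq_nonneg (e n x)]
    have h2 := hQ x hx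
    gcongr
  have hmono : MonotoneOn (fun x => E x * Real.exp (2 * Q * x)) (Icc a b) := by
    refine monotoneOn_of_deriv_nonneg (convex_Icc a b)
      (fun x hx => (hFd _ x hx).continuousAt.continuousWithinAt)
      (fun x hx => (hFd _ x (interior_subset hx)).differentiableAt.differentiableWithinAt) ?_
    intro x hx
    rw [(hFd _ x (interior_subset hx)).deriv]
    have := (abs_le.mp (hb1 x (interior_subset hx))).2
    exact mul_nonneg (by linarith) (Real.exp_pos _).le
  have hanti : AntitoneOn (fun x => E x * Real.exp (-(2 * Q) * x)) (Icc a b) := by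
    refine antitoneOn_of_deriv_nonpos (convex_Icc a b)
      (fun x hx => (hFd _ x hx).continuousAt.continuousWithinAt)
      (fun x hx => (hFd _ x (interior_subset hx)).differentiableAt.differentiableWithinAt) ?_
    intro x hx
    rw [(hFd _ x (interior_subset hx)).deriv]
    have := (abs_le.mp (hb1 x (interior_subset hx))).1
    exact mul_nonpos_of_nonpos_of_nonneg (by linarith) (Real.exp_pos _).le
  have key : ∀ c : ℝ, c * (y - x) ≤ 2 * Q * (b - a) →
      E x * Real.exp (c * x) ≤ E y * Real.exp (c * y) →
      E x ≤ Real.exp (2 * Q * (b - a)) * E y := by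
    intro c hc h
    have h1 : E x ≤ E y * Real.exp (c * (y - x)) := by
      have h3 : Real.exp (c * (y - x)) = Real.exp (c * y) / Real.exp (c * x) := by
        rw [← Real.exp_sub]; congr 1; ring
      rw [h3, mul_div_assoc', le_div_iff₀ (Real.exp_pos _)]
      exact h
    calc E x ≤ E y * Real.exp (c * (y - x)) := h1
      _ ≤ E y * Real.exp (2 * Q * (b - a)) :=
        mul_le_mul_of_nonneg_left (Real.exp_le_exp.mpr hc) (hE0 y)
      _ = _ := mul_comm _ _
  rcases le_total x y with hxy | hxy
  · refine key (2 * Q) ?_ (hmono hx hy hxy)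
    exact mul_le_mul_of_nonneg_left (by linarith [hx.1, hy.2]) (by positivity)
  · refine key (-(2 * Q)) ?_ (hanti hy hx hxy)
    rw [neg_mul, ← mul_neg]
    exact mul_le_mul_of_nonneg_left (by linarith [hx.2, hy.1]) (by positivity)

lemma JPair.bdd {α β : ℝ} (hα : -1 < α) (hβ : -1 < β) {κ ℓ : ℕ → ℝ} {e o : ℕ → ℝ → ℝ}
    (P : JPair α β κ ℓ e o) {a b : ℝ} (ha : 0 < a) (hab : a < b) (hb : b < π) :
    ∃ D : ℝ, 0 ≤ D ∧ ∀ n, ∀ x ∈ Icc a b, |e n x| ≤ D ∧ |o n x| ≤ D := by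
  obtain ⟨Q, hQ0, hQ⟩ := jq_bdd α β ha hb
  have := finite_mup α β hα hβ
  set μ := jacobiMeasurePlus α β with hμ
  set R := Real.exp (2 * Q * (b - a)) with hR
  have hRp : 0 < R := Real.exp_pos _
  have hm : 0 < μ.real (Icc a b) :=
    ENNReal.toReal_pos (mup_Icc_ne_zero α β ha hab hb) (measure_ne_top _ _)
  have hE : ∀ n, ∀ x ∈ Icc a b, e n x ^ 2 + o n x ^ 2 ≤ R * 2 / μ.real (Icc a b) := by
    intro n x hx
    have hi : Integrable (fun y => R * (e n y ^ 2 + o n y ^ 2)) μ :=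
      (integrable_cont α β hα hβ (((P.ce n).pow 2).add ((P.co n).pow 2))).const_mul R
    rw [le_div_iff₀ hm]
    calc (e n x ^ 2 + o n x ^ 2) * μ.real (Icc a b)
        = ∫ _ in Icc a b, (e n x ^ 2 + o n x ^ 2) ∂μ := by
          rw [setIntegral_const, smul_eq_mul, mul_comm]
      _ ≤ ∫ y in Icc a b, R * (e n y ^ 2 + o n y ^ 2) ∂μ := by
          refine setIntegral_mono_on (integrable_const _) hi.integrableOn measurableSet_Icc ?_
          intro y hy
          exact P.energy ha hb hQ0 hQ n hx hy
      _ ≤ ∫ y, R * (e n y ^ 2 + o n y ^ 2) ∂μ :=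
          setIntegral_le_integral hi (Filter.Eventually.of_forall fun y => by
            simp only [Pi.zero_apply]; positivity)
      _ = R * (∫ y, e n y ^ 2 ∂μ + ∫ y, o n y ^ 2 ∂μ) := by
          rw [integral_const_mul, integral_add]
          · exact integrable_cont α β hα hβ ((P.ce n).pow 2)
          · exact integrable_cont α β hα hβ ((P.co n).pow 2)
      _ ≤ R * 2 := by
          refine mul_le_mul_of_nonneg_left ?_ hRp.le
          linarith [P.ne n, P.no n]
  set D0 := R * 2 / μ.real (Icc a b) with hD0
  have hD : 0 ≤ D0 := by positivity
  refine ⟨D0 + 1, by linarith, fun n x hx => ⟨?_, ?_⟩⟩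
  · have := hE n x hx
    refine abs_le_of_sq_le_sq ?_ (by linarith)
    nlinarith [sq_nonneg (o n x)]
  · have := hE n x hx
    refine abs_le_of_sq_le_sq ?_ (by linarith)
    nlinarith [sq_nonneg (e n x)]

/-! ### Rapidly decreasing sequences -/

def RD (b : ℕ → ℝ) : Prop := ∀ k : ℕ, Summable fun n : ℕ => ((n : ℝ) + 1) ^ k * |b n|

lemma RD.mul {b d : ℕ → ℝ} (hb : RD b) {D : ℝ} {k : ℕ}
    (hd : ∀ n : ℕ, |d n| ≤ D * ((n : ℝ) + 1) ^ k) : RD (fun n => b n * d n) := by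
  intro j
  refine Summable.of_nonneg_of_le (fun n => by positivity) (fun n => ?_) ((hb (j + k)).mul_left D)
  rw [abs_mul, pow_add]
  calc ((n : ℝ) + 1) ^ j * (|b n| * |d n|)
      ≤ ((n : ℝ) + 1) ^ j * (|b n| * (D * ((n : ℝ) + 1) ^ k)) := by
        gcongr; exact hd n
    _ = _ := by ring

lemma RD.summable {b : ℕ → ℝ} (hb : RD b) : Summable b := by
  have := hb 0
  simp only [pow_zero, one_mul] at this
  exact this.of_abs

lemma RD_exp {ℓ : ℕ → ℝ} {B : ℝ} (hB : ∀ n : ℕ, (n : ℝ) - B ≤ ℓ n) {t : ℝ} (ht : 0 < t) :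
    RD (fun n => Real.exp (-t * ℓ n)) := by
  intro k
  have h1 := Real.summable_pow_mul_exp_neg_nat_mul k ht
  have h2 := ((summable_nat_add_iff 1).2 h1).mul_left (Real.exp (t * B + t))
  refine Summable.of_nonneg_of_le (fun n => by positivity) (fun n => ?_) h2
  rw [abs_of_pos (Real.exp_pos _)]
  have : Real.exp (-t * ℓ n) ≤ Real.exp (t * B + t) * Real.exp (-t * ((n + 1 : ℕ) : ℝ)) := by
    rw [← Real.exp_add]
    refine Real.exp_le_exp.mpr ?_
    have := mul_le_mul_of_nonneg_left (hB n) ht.le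
    push_cast
    linarith
  calc ((n : ℝ) + 1) ^ k * Real.exp (-t * ℓ n)
      ≤ ((n : ℝ) + 1) ^ k * (Real.exp (t * B + t) * Real.exp (-t * ((n + 1 : ℕ) : ℝ))) := by
        gcongr
    _ = _ := by push_cast; ring

lemma RD.hasDerivAt {b : ℕ → ℝ} (hb : RD b) {g g' : ℕ → ℝ → ℝ} {u v D : ℝ} {x : ℝ}
    (hx : x ∈ Ioo u v) (hg : ∀ n, ∀ y ∈ Ioo u v, HasDerivAt (g n) (g' n y) y)
    (h1 : ∀ n : ℕ, |g n x| ≤ D) (h2 : ∀ n : ℕ, ∀ y ∈ Ioo u v, |g' n y| ≤ D * ((n : ℝ) + 1)) :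
    HasDerivAt (fun y => ∑' n, b n * g n y) (∑' n, b n * g' n x) x := by
  have hu : Summable fun n : ℕ => D * (((n : ℝ) + 1) ^ 1 * |b n|) := (hb 1).mul_left D
  refine hasDerivAt_tsum_of_isPreconnected hu isOpen_Ioo isPreconnected_Ioo
    (g := fun n y => b n * g n y) (g' := fun n y => b n * g' n y)
    (fun n y hy => (hg n y hy).const_mul (b n)) (fun n y hy => ?_) hx ?_ hx
  · rw [Real.norm_eq_abs, abs_mul]
    calc |b n| * |g' n y| ≤ |b n| * (D * ((n : ℝ) + 1)) := by gcongr; exact h2 n y hy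
      _ = _ := by ring
  · exact (hb.mul (D := D) (k := 0) (d := fun n => g n x) (by simpa using h1)).summable

lemma iter_deriv_t {ℓ : ℕ → ℝ} {B : ℝ} (hB : ∀ n : ℕ, (n : ℝ) - B ≤ ℓ n)
    (hB' : ∀ n : ℕ, |ℓ n| ≤ B * ((n : ℝ) + 1)) {d : ℕ → ℝ} {D : ℝ} {k : ℕ}
    (hd : ∀ n : ℕ, |d n| ≤ D * ((n : ℝ) + 1) ^ k) {F : ℝ → ℝ}
    (hF : ∀ s > 0, F s = ∑' n, Real.exp (-s * ℓ n) * d n) (M : ℕ) :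
    ∀ t > 0, HasSum (fun n => Real.exp (-t * ℓ n) * ((-ℓ n) ^ M * d n)) (deriv^[M] F t) := by
  have hdM : ∀ M : ℕ, ∀ n : ℕ, |(-ℓ n) ^ M * d n| ≤ B ^ M * D * ((n : ℝ) + 1) ^ (M + k) := by
    intro M n
    rw [abs_mul, abs_pow, abs_neg]
    calc |ℓ n| ^ M * |d n| ≤ (B * ((n : ℝ) + 1)) ^ M * (D * ((n : ℝ) + 1) ^ k) :=
          mul_le_mul (pow_le_pow_left₀ (abs_nonneg _) (hB' n) M) (hd n) (abs_nonneg _)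
            (pow_nonneg ((abs_nonneg _).trans (hB' n)) M)
      _ = _ := by rw [mul_pow, pow_add]; ring
  have hsum : ∀ M : ℕ, ∀ t > 0, Summable (fun n => Real.exp (-t * ℓ n) * ((-ℓ n) ^ M * d n)) :=
    fun M t ht => ((RD_exp hB ht).mul (hdM M)).summable
  suffices h : ∀ t > 0, deriv^[M] F t = ∑' n, Real.exp (-t * ℓ n) * ((-ℓ n) ^ M * d n) by
    intro t ht
    rw [h t ht]
    exact (hsum M t ht).hasSum
  induction M with
  | zero => intro t ht; simpa using hF t ht
  | succ M ih =>
    intro t ht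
    rw [Function.iterate_succ_apply']
    have heq : deriv^[M] F =ᶠ[nhds t] fun s => ∑' n, Real.exp (-s * ℓ n) * ((-ℓ n) ^ M * d n) := by
      filter_upwards [isOpen_Ioi.mem_nhds ht] with s hs using ih s hs
    rw [heq.deriv_eq]
    have ht2 : 0 < t / 2 := by linarith
    have htm : t ∈ Ioo (t / 2) (t + t / 2) := ⟨by linarith, by linarith⟩
    have hRD := ((RD_exp hB ht2).mul (hdM (M + 1))) 0
    refine (hasDerivAt_tsum_of_isPreconnected (y₀ := t)
      (u := fun n : ℕ => Real.exp (B * t) * (((n : ℝ) + 1) ^ 0 *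
        |Real.exp (-(t / 2) * ℓ n) * ((-ℓ n) ^ (M + 1) * d n)|)) (hRD.mul_left _)
      (isOpen_Ioo (a := t / 2) (b := t + t / 2)) isPreconnected_Ioo
      (g := fun (n : ℕ) (s : ℝ) => Real.exp (-s * ℓ n) * ((-ℓ n) ^ M * d n))
      (g' := fun (n : ℕ) (s : ℝ) => Real.exp (-s * ℓ n) * ((-ℓ n) ^ (M + 1) * d n))
      (fun n s hs => ?_) (fun n s hs => ?_) htm (hsum M t ht) htm).deriv
    · have h1 : HasDerivAt (fun s : ℝ => -s * ℓ n) (-ℓ n) s := by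
        simpa using (hasDerivAt_id s).neg.mul_const (ℓ n)
      refine (h1.exp.mul_const ((-ℓ n) ^ M * d n)).congr_deriv ?_
      ring
    · rw [Real.norm_eq_abs, abs_mul (Real.exp (-s * ℓ n)), abs_mul (Real.exp (-(t / 2) * ℓ n)),
        abs_of_pos (Real.exp_pos (-s * ℓ n)), abs_of_pos (Real.exp_pos (-(t / 2) * ℓ n)), pow_zero, one_mul, ← mul_assoc, ← Real.exp_add]
      refine mul_le_mul_of_nonneg_right (Real.exp_le_exp.mpr ?_) (abs_nonneg _)
      have hB0 : 0 ≤ B := by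
        have := hB' 0
        simp at this
        exact (abs_nonneg _).trans this
      have h3 : -B ≤ ℓ n := by
        have := hB n
        have : (0 : ℝ) ≤ n := Nat.cast_nonneg n
        linarith
      have h4 : 0 ≤ (s - t / 2) * (ℓ n + B) := mul_nonneg (by linarith [hs.1]) (by linarith)
      have h5 : (s - t / 2) * B ≤ t * B := mul_le_mul_of_nonneg_right (by linarith [hs.2]) hB0
      linarith

/-! ### Space derivatives -/

lemma JPair.kbd {α β : ℝ} {κ ℓ : ℕ → ℝ} {e o : ℕ → ℝ → ℝ}
    (P : JPair α β κ ℓ e o) : ∃ B : ℝ, 0 ≤ B ∧ (∀ n : ℕ, (n : ℝ) - B ≤ ℓ n) ∧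
      (∀ n : ℕ, |ℓ n| ≤ B * ((n : ℝ) + 1)) ∧ ∀ n : ℕ, |κ n| ≤ B * ((n : ℝ) + 1) := by
  obtain ⟨B, hB0, hB⟩ := P.lbd
  refine ⟨B, hB0, fun n => (hB n).1, fun n => ?_, fun n => ?_⟩
  · rw [abs_of_nonneg ((P.kpos n).trans (P.kle n))]; exact (hB n).2
  · rw [abs_of_nonneg (P.kpos n)]; exact (P.kle n).trans (hB n).2

lemma JPair.der_e {α β : ℝ} (hα : -1 < α) (hβ : -1 < β) {κ ℓ : ℕ → ℝ} {e o : ℕ → ℝ → ℝ}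
    (P : JPair α β κ ℓ e o) {b : ℕ → ℝ} (hb : RD b) {x : ℝ} (hx : x ∈ Ioo 0 π) :
    deriv (fun y => ∑' n, b n * e n y) x = ∑' n, b n * (-κ n) * o n x := by
  obtain ⟨D, hD0, hD⟩ := P.bdd hα hβ (a := x / 2) (b := (x + π) / 2) (by linarith [hx.1])
    (by linarith [hx.2, Real.pi_pos]) (by linarith [hx.2])
  obtain ⟨B, hB0, -, -, hB⟩ := P.kbd
  have hxm : x ∈ Ioo (x / 2) ((x + π) / 2) := ⟨by linarith [hx.1], by linarith [hx.2]⟩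
  have h := hb.hasDerivAt (g := e) (g' := fun n y => -κ n * o n y) (D := D + B * D) hxm
    (fun n y hy => P.de n y ⟨by linarith [hy.1, hx.1], by linarith [hy.2, hx.2]⟩)
    (fun n => by
      have := (hD n x (Ioo_subset_Icc_self hxm)).1
      have : 0 ≤ B * D := by positivity
      linarith)
    (fun n y hy => by
      rw [abs_mul, abs_neg]
      have h1 := (hD n y (Ioo_subset_Icc_self hy)).2
      calc |κ n| * |o n y| ≤ (B * ((n : ℝ) + 1)) * D := by
            gcongr; exact hB n
        _ ≤ (D + B * D) * ((n : ℝ) + 1) := by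
            have : 0 ≤ D * ((n : ℝ) + 1) := by positivity
            linarith)
  rw [h.deriv]
  simp_rw [mul_assoc]

lemma JPair.der_o {α β : ℝ} (hα : -1 < α) (hβ : -1 < β) {κ ℓ : ℕ → ℝ} {e o : ℕ → ℝ → ℝ}
    (P : JPair α β κ ℓ e o) {b : ℕ → ℝ} (hb : RD b) {x : ℝ} (hx : x ∈ Ioo 0 π) :
    delStar α β (fun y => ∑' n, b n * o n y) x = ∑' n, b n * (-κ n) * e n x := by
  have ha' : 0 < x / 2 := by linarith [hx.1]
  have hb' : (x + π) / 2 < π := by linarith [hx.2]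
  obtain ⟨D, hD0, hD⟩ := P.bdd hα hβ (a := x / 2) (b := (x + π) / 2) ha'
    (by linarith [hx.2, Real.pi_pos]) hb'
  obtain ⟨Q, hQ0, hQ⟩ := jq_bdd α β ha' hb'
  obtain ⟨B, hB0, -, -, hB⟩ := P.kbd
  have hxm : x ∈ Ioo (x / 2) ((x + π) / 2) := ⟨by linarith [hx.1], by linarith [hx.2]⟩
  have h := hb.hasDerivAt (g := o) (g' := fun n y => κ n * e n y - jq α β y * o n y)
    (D := D + B * D + Q * D) hxm
    (fun n y hy => P.dd n y ⟨by linarith [hy.1, hx.1], by linarith [hy.2, hx.2]⟩)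
    (fun n => by
      have := (hD n x (Ioo_subset_Icc_self hxm)).2
      have : 0 ≤ B * D := by positivity
      have : 0 ≤ Q * D := by positivity
      linarith)
    (fun n y hy => by
      have h1 := hD n y (Ioo_subset_Icc_self hy)
      have h2 := hQ y (Ioo_subset_Icc_self hy)
      have h1a := h1.1
      have h1b := h1.2
      calc |κ n * e n y - jq α β y * o n y| ≤ |κ n * e n y| + |jq α β y * o n y| := abs_sub _ _
        _ = |κ n| * |e n y| + |jq α β y| * |o n y| := by rw [abs_mul, abs_mul]
        _ ≤ (B * ((n : ℝ) + 1)) * D + Q * D := by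
            gcongr; exact hB n
        _ ≤ (D + B * D + Q * D) * ((n : ℝ) + 1) := by
            have : 0 ≤ D * ((n : ℝ) + 1) := by positivity
            have : 0 ≤ Q * D * (n : ℝ) := by positivity
            linarith)
  have s1 : Summable fun n => b n * κ n * e n x :=
    ((hb.mul (k := 1) (by simpa using hB)).mul (D := D) (k := 0)
      (d := fun n => e n x) (by simpa using fun n => (hD n x (Ioo_subset_Icc_self hxm)).1)).summable
  have s2 : Summable fun n => b n * o n x :=
    (hb.mul (D := D) (k := 0)
      (d := fun n => o n x) (by simpa using fun n => (hD n x (Ioo_subset_Icc_self hxm)).2)).summable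
  have e1 : ∑' n, b n * (κ n * e n x - jq α β x * o n x) =
      ∑' n, b n * κ n * e n x - jq α β x * ∑' n, b n * o n x := by
    rw [← tsum_mul_left, ← s1.tsum_sub (s2.mul_left _)]
    refine tsum_congr fun n => by ring
  have e2 : ∑' n, b n * (-κ n) * e n x = -∑' n, b n * κ n * e n x := by
    rw [← tsum_neg]
    refine tsum_congr fun n => by ring
  unfold delStar
  rw [h.deriv, e1, e2, jq]
  ring

lemma delStar_congr (α β : ℝ) {f g : ℝ → ℝ} {x : ℝ} (h : f =ᶠ[nhds x] g) :
    delStar α β f x = delStar α β g x := by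
  unfold delStar
  rw [h.deriv_eq, h.eq_of_nhds]

/-- alternate between two families -/
def altF (N : ℕ) (e o : ℕ → ℝ → ℝ) : ℕ → ℝ → ℝ := if N % 2 = 0 then e else o

lemma RD.mul_kpow {b κ : ℕ → ℝ} (hb : RD b) {B : ℝ} (hB : ∀ n : ℕ, |κ n| ≤ B * ((n : ℝ) + 1))
    (N : ℕ) : RD (fun n => b n * (-κ n) ^ N) := by
  refine hb.mul (D := B ^ N) (k := N) fun n => ?_
  rw [abs_pow, abs_neg, ← mul_pow]
  exact pow_le_pow_left₀ (abs_nonneg _) (hB n) N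

lemma JPair.deltaEven_eq {α β : ℝ} (hα : -1 < α) (hβ : -1 < β) {κ ℓ : ℕ → ℝ} {e o : ℕ → ℝ → ℝ}
    (P : JPair α β κ ℓ e o) {b : ℕ → ℝ} (hb : RD b) (N : ℕ) :
    ∀ x ∈ Ioo 0 π, deltaEven α β N (fun y => ∑' n, b n * e n y) x =
      ∑' n, b n * (-κ n) ^ N * altF N e o n x := by
  obtain ⟨B, hB0, -, -, hB⟩ := P.kbd
  induction N with
  | zero => intro x hx; simp [deltaEven, altF]
  | succ N ih =>
    intro x hx
    have heq : deltaEven α β N (fun y => ∑' n, b n * e n y) =ᶠ[nhds x]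
        fun y => ∑' n, b n * (-κ n) ^ N * altF N e o n y := by
      filter_upwards [isOpen_Ioo.mem_nhds hx] with y hy using ih y hy
    have hbN := hb.mul_kpow hB N
    simp only [deltaEven]
    rcases Nat.mod_two_eq_zero_or_one N with h | h
    · have h' : (N + 1) % 2 ≠ 0 := by omega
      simp only [altF, if_pos h, if_neg h'] at heq ⊢
      rw [heq.deriv_eq, P.der_e hα hβ hbN hx]
      exact tsum_congr fun n => by ring
    · have h0 : N % 2 ≠ 0 := by omega
      have h' : (N + 1) % 2 = 0 := by omega
      simp only [altF, if_neg h0, if_pos h'] at heq ⊢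
      rw [delStar_congr α β heq, P.der_o hα hβ hbN hx]
      exact tsum_congr fun n => by ring

lemma JPair.deltaOdd_eq {α β : ℝ} (hα : -1 < α) (hβ : -1 < β) {κ ℓ : ℕ → ℝ} {e o : ℕ → ℝ → ℝ}
    (P : JPair α β κ ℓ e o) {b : ℕ → ℝ} (hb : RD b) (N : ℕ) :
    ∀ x ∈ Ioo 0 π, deltaOdd α β N (fun y => ∑' n, b n * o n y) x =
      ∑' n, b n * (-κ n) ^ N * altF N o e n x := by
  obtain ⟨B, hB0, -, -, hB⟩ := P.kbd
  induction N with
  | zero => intro x hx; simp [deltaOdd, altF]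
  | succ N ih =>
    intro x hx
    have heq : deltaOdd α β N (fun y => ∑' n, b n * o n y) =ᶠ[nhds x]
        fun y => ∑' n, b n * (-κ n) ^ N * altF N o e n y := by
      filter_upwards [isOpen_Ioo.mem_nhds hx] with y hy using ih y hy
    have hbN := hb.mul_kpow hB N
    simp only [deltaOdd]
    rcases Nat.mod_two_eq_zero_or_one N with h | h
    · have h' : (N + 1) % 2 ≠ 0 := by omega
      simp only [altF, if_pos h, if_neg h'] at heq ⊢
      rw [delStar_congr α β heq, P.der_o hα hβ hbN hx]
      exact tsum_congr fun n => by ring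
    · have h0 : N % 2 ≠ 0 := by omega
      have h' : (N + 1) % 2 = 0 := by omega
      simp only [altF, if_neg h0, if_pos h'] at heq ⊢
      rw [heq.deriv_eq, P.der_e hα hβ hbN hx]
      exact tsum_congr fun n => by ring

/-- The square function estimate for an abstract operation `δ_N`. -/
lemma square_est {α β : ℝ} (hα : -1 < α) (hβ : -1 < β) {κ ℓ : ℕ → ℝ} {e o s g : ℕ → ℝ → ℝ}
    (P : JPair α β κ ℓ e o) (hs : s = e ∨ s = o) (hgg : g = e ∨ g = o)
    {M N : ℕ} (hMN : 0 < M + N) (δ : (ℝ → ℝ) → ℝ → ℝ)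
    (hδ : ∀ b, RD b → ∀ x ∈ Ioo 0 π, δ (fun y => ∑' n, b n * s n y) x =
      ∑' n, b n * (-κ n) ^ N * g n x)
    {f : ℝ → ℝ} (hf : Measurable f)
    (hfi : Integrable (fun θ => f θ ^ 2) (jacobiMeasurePlus α β)) :
    ∫⁻ θ, (∫⁻ t in Ioi (0 : ℝ), ENNReal.ofReal
      ((deriv^[M] (fun τ => δ (fun θ' => ∑' n, Real.exp (-τ * ℓ n) *
        (∫ φ, f φ * s n φ ∂(jacobiMeasurePlus α β)) * s n θ') θ) t) ^ 2 *
        t ^ (2 * M + 2 * N - 1))) ∂(jacobiMeasurePlus α β) ≤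
    ENNReal.ofReal ((∫ θ, f θ ^ 2 ∂(jacobiMeasurePlus α β)) * Real.Gamma (2 * M + 2 * N)) := by
  obtain ⟨B, hB0, hB1, hB2, hB⟩ := P.kbd
  set c : ℕ → ℝ := fun n => ∫ φ, f φ * s n φ ∂(jacobiMeasurePlus α β) with hc
  set A : ℝ := ∫ θ, f θ ^ 2 ∂(jacobiMeasurePlus α β) with hA
  have hbes : ∀ K, ∑ n ∈ Finset.range K, c n ^ 2 ≤ A := by
    intro K
    rcases hs with rfl | rfl
    · exact bessel α β hα hβ P.ce P.oe P.ne hf hfi K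
    · exact bessel α β hα hβ P.co P.oo P.no hf hfi K
  have hA0 : 0 ≤ A := by simpa using hbes 0
  have hcb : ∀ n : ℕ, |c n| ≤ A + 1 := by
    intro n
    have h1 : c n ^ 2 ≤ A :=
      (Finset.single_le_sum (f := fun n => c n ^ 2) (fun i _ => sq_nonneg (c i))
        (Finset.self_mem_range_succ n)).trans (hbes (n + 1))
    exact abs_le_of_sq_le_sq (by nlinarith) (by linarith)
  have hgc : ∀ n, Continuous (g n) := by
    rcases hgg with rfl | rfl
    · exact P.ce
    · exact P.co
  have hgo : ∀ n m, n ≠ m → ∫ θ, g n θ * g m θ ∂(jacobiMeasurePlus α β) = 0 := by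
    rcases hgg with rfl | rfl
    · exact P.oe
    · exact P.oo
  have hgn : ∀ n, ∫ θ, g n θ ^ 2 ∂(jacobiMeasurePlus α β) ≤ 1 := by
    rcases hgg with rfl | rfl
    · exact P.ne
    · exact P.no
  refine main_est α β hα hβ hgc hgo hgn P.kpos P.kle hMN hbes
    (fun θ t => deriv^[M] (fun τ => δ (fun θ' => ∑' n, Real.exp (-τ * ℓ n) * c n * s n θ') θ) t) ?_
  intro θ hθ t ht
  obtain ⟨D, hD0, hD⟩ := P.bdd hα hβ (a := θ / 2) (b := (θ + π) / 2) (by linarith [hθ.1])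
    (by linarith [hθ.2, Real.pi_pos]) (by linarith [hθ.2])
  have hθm : θ ∈ Icc (θ / 2) ((θ + π) / 2) := ⟨by linarith [hθ.1], by linarith [hθ.2]⟩
  have hgD : ∀ n, |g n θ| ≤ D := by
    rcases hgg with rfl | rfl
    · exact fun n => (hD n θ hθm).1
    · exact fun n => (hD n θ hθm).2
  have hd : ∀ n : ℕ, |c n * (-κ n) ^ N * g n θ| ≤ (A + 1) * B ^ N * D * ((n : ℝ) + 1) ^ N := by
    intro n
    rw [abs_mul, abs_mul, abs_pow, abs_neg]
    calc |c n| * |κ n| ^ N * |g n θ| ≤ (A + 1) * (B * ((n : ℝ) + 1)) ^ N * D := by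
          gcongr
          · exact hcb n
          · exact hB n
          · exact hgD n
      _ = _ := by rw [mul_pow]; ring
  have := iter_deriv_t hB1 hB2 hd
    (F := fun τ => δ (fun θ' => ∑' n, Real.exp (-τ * ℓ n) * c n * s n θ') θ) (fun τ hτ => by
      have hRD : RD fun n => Real.exp (-τ * ℓ n) * c n :=
        (RD_exp hB1 hτ).mul (D := A + 1) (k := 0) (by simpa using hcb)
      rw [hδ _ hRD θ hθ]
      exact tsum_congr fun n => by ring) M t ht
  convert this using 2
  ring


/-! ### The concrete systems -/

lemma kap_nonneg {s : ℝ} (hs : -1 < s) (k : ℕ) : 0 ≤ (k : ℝ) * (k + s) := by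
  rcases Nat.eq_zero_or_pos k with rfl | hk
  · simp
  · have : (1 : ℝ) ≤ k := by exact_mod_cast hk
    exact mul_nonneg (by linarith) (by linarith)

lemma kap_pos {s : ℝ} (hs : -1 < s) {k : ℕ} (hk : k ≠ 0) : 0 < (k : ℝ) * (k + s) := by
  have : (1 : ℝ) ≤ k := by exact_mod_cast Nat.pos_of_ne_zero hk
  exact mul_pos (by linarith) (by linarith)

lemma mkPair (α β : ℝ) (hα : -1 < α) (hβ : -1 < β) (σ : ℕ → ℕ) (hσ : Function.Injective σ)
    (h1 : ∀ n, n ≤ σ n) (h2 : ∀ n, σ n ≤ n + 1) (a : ℕ → ℝ)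
    (ha : ∀ n, a n ^ 2 * ∫ θ, pf α β (σ n) θ * pf α β (σ n) θ ∂(jacobiMeasurePlus α β) ≤ 1) :
    JPair α β (fun n => √((σ n : ℝ) * (σ n + (α + β + 1)))) (fun n => √(jLam α β (σ n)))
      (fun n θ => a n * pf α β (σ n) θ)
      (fun n θ => -(a n / √((σ n : ℝ) * (σ n + (α + β + 1)))) * pd α β (σ n) θ) := by
  have hs : -1 < α + β + 1 := by linarith
  have hk2 : ∀ n, √((σ n : ℝ) * (σ n + (α + β + 1))) ^ 2 = (σ n : ℝ) * (σ n + (α + β + 1)) :=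
    fun n => Real.sq_sqrt (kap_nonneg hs (σ n))
  have hk0 : ∀ n, σ n ≠ 0 → √((σ n : ℝ) * (σ n + (α + β + 1))) ≠ 0 :=
    fun n hn => (Real.sqrt_pos.2 (kap_pos hs hn)).ne'
  refine
    { de := fun n θ hθ => ?_
      dd := fun n θ hθ => ?_
      ce := fun n => continuous_const.mul (continuous_pf α β _)
      co := fun n => continuous_const.mul (continuous_pd α β _)
      oe := fun n m hnm => ?_
      oo := fun n m hnm => ?_
      ne := fun n => ?_
      no := fun n => ?_
      kpos := fun n => Real.sqrt_nonneg _
      kle := fun n => ?_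
      lbd := ?_ }
  · refine ((hasDerivAt_pf α β (σ n) θ).const_mul (a n)).congr_deriv ?_
    by_cases h0 : σ n = 0
    · rw [h0, pd_zero]; simp
    · have := hk0 n h0
      field_simp
  · refine ((hasDerivAt_pd α β hα hβ (σ n) hθ).const_mul _).congr_deriv ?_
    by_cases h0 : σ n = 0
    · rw [h0, pd_zero]; simp
    · have h3 := hk0 n h0
      have h4 := hk2 n
      set k := √((σ n : ℝ) * (σ n + (α + β + 1)))
      rw [← h4]
      field_simp
      ring
  · have : ∀ θ, a n * pf α β (σ n) θ * (a m * pf α β (σ m) θ) =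
        (a n * a m) * (pf α β (σ n) θ * pf α β (σ m) θ) := fun θ => by ring
    simp_rw [this]
    rw [integral_const_mul, pf_orth α β hα hβ (fun h => hnm (hσ h)), mul_zero]
  · have : ∀ x y θ, x * pd α β (σ n) θ * (y * pd α β (σ m) θ) =
        (x * y) * (pd α β (σ n) θ * pd α β (σ m) θ) := fun x y θ => by ring
    simp_rw [this]
    rw [integral_const_mul, pd_orth α β hα hβ (fun h => hnm (hσ h)), mul_zero]
  · have : ∀ θ, (a n * pf α β (σ n) θ) ^ 2 =
        (a n ^ 2) * (pf α β (σ n) θ * pf α β (σ n) θ) := fun θ => by ring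
    simp_rw [this]
    rw [integral_const_mul]
    exact ha n
  · have : ∀ x θ, (x * pd α β (σ n) θ) ^ 2 =
        (x ^ 2) * (pd α β (σ n) θ * pd α β (σ n) θ) := fun x θ => by ring
    simp_rw [this]
    rw [integral_const_mul, ibp α β hα hβ, neg_sq, div_pow, hk2 n]
    by_cases h0 : σ n = 0
    · rw [h0]; simp
    · have h3 := (kap_pos hs h0).ne'
      rw [← mul_assoc, div_mul_cancel₀ _ h3]
      exact ha n
  · refine Real.sqrt_le_sqrt ?_
    unfold jLam
    nlinarith [sq_nonneg (α + β + 1)]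
  · refine ⟨1 + |(α + β + 1) / 2|, by positivity, fun n => ?_⟩
    have e : √(jLam α β (σ n)) = |(σ n : ℝ) + (α + β + 1) / 2| := by
      unfold jLam; rw [Real.sqrt_sq_eq_abs]
    have h3 : (n : ℝ) ≤ σ n := by exact_mod_cast h1 n
    have h4 : (σ n : ℝ) ≤ n + 1 := by exact_mod_cast h2 n
    have h5 : (0 : ℝ) ≤ n := Nat.cast_nonneg n
    rw [e]
    constructor
    · have := le_abs_self ((σ n : ℝ) + (α + β + 1) / 2)
      have := neg_abs_le ((α + β + 1) / 2)
      linarith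
    · have := abs_add_le (σ n : ℝ) ((α + β + 1) / 2)
      rw [abs_of_nonneg (h5.trans h3)] at this
      have h6 : 0 ≤ |(α + β + 1) / 2| * n := by positivity
      linarith

lemma cJ_sq_le (α β : ℝ) (n : ℕ) :
    cJ α β n ^ 2 * ∫ θ, jacobiP α β n (Real.cos θ) ^ 2 ∂(jacobiMeasurePlus α β) ≤ 1 := by
  unfold cJ
  have h0 : 0 ≤ ∫ θ, jacobiP α β n (Real.cos θ) ^ 2 ∂(jacobiMeasurePlus α β) :=
    integral_nonneg fun θ => sq_nonneg _
  set I := ∫ θ, jacobiP α β n (Real.cos θ) ^ 2 ∂(jacobiMeasurePlus α β)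
  rcases h0.eq_or_lt with h | h
  · rw [← h]; simp
  · rw [← Real.rpow_natCast, ← Real.rpow_mul h.le]
    norm_num
    rw [Real.rpow_neg_one, inv_mul_cancel₀ h.ne']

lemma sqrt2_inv_sq : ((√2)⁻¹ : ℝ) ^ 2 = 1 / 2 := by
  rw [inv_pow, Real.sq_sqrt (by norm_num)]; norm_num

lemma symPhi_even (α β : ℝ) (n : ℕ) :
    symPhi α β (2 * n) = fun θ => ((√2)⁻¹ * cJ α β n) * pf α β n θ := by
  funext θ
  have : Even (2 * n) := even_two_mul n
  rw [symPhi, if_pos this, trigP, pf_eq, Nat.mul_div_cancel_left n two_pos, mul_assoc]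

lemma evenPair (α β : ℝ) (hα : -1 < α) (hβ : -1 < β) :
    ∃ κ o, JPair α β κ (fun n => √(jLam α β n)) (fun n => symPhi α β (2 * n)) o := by
  have hp := mkPair α β hα hβ id Function.injective_id (fun n => le_rfl) (fun n => Nat.le_succ n)
      (fun n => (√2)⁻¹ * cJ α β n) fun n => by
        have h1 := cJ_sq_le α β n
        simp only [id, ← sq, pf_eq]
        rw [mul_pow, sqrt2_inv_sq]
        linarith
  have he : (fun n => symPhi α β (2 * n)) = fun n θ => ((√2)⁻¹ * cJ α β n) * pf α β n θ :=
    funext fun n => symPhi_even α β n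
  rw [he]
  exact ⟨_, _, hp⟩

/-- the coefficients for the odd system -/
def aOdd (α β : ℝ) (n : ℕ) : ℝ := (√2)⁻¹ * cJ (α + 1) (β + 1) n *
  √(((n + 1 : ℕ) : ℝ) * ((n + 1 : ℕ) + (α + β + 1))) / ((n : ℝ) + 1 + (α + β + 1))

lemma symPhi_odd (α β : ℝ) (hα : -1 < α) (hβ : -1 < β) (n : ℕ) :
    symPhi α β (2 * n + 1) = fun θ => -(aOdd α β n /
      √(((n + 1 : ℕ) : ℝ) * ((n + 1 : ℕ) + (α + β + 1)))) * pd α β (n + 1) θ := by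
  funext θ
  have h : ¬ Even (2 * n + 1) := by simp
  have hs : -1 < α + β + 1 := by linarith
  have h1 := (Real.sqrt_pos.2 (kap_pos hs (Nat.succ_ne_zero n))).ne'
  have h2 : (n : ℝ) + 1 + (α + β + 1) ≠ 0 := by
    have : (0 : ℝ) ≤ n := Nat.cast_nonneg n
    linarith
  rw [symPhi, if_neg h, trigP, pd_succ α β hα hβ, aOdd, Nat.add_sub_cancel,
    Nat.mul_div_cancel_left n two_pos]
  simp only [Nat.succ_eq_add_one] at h1
  field_simp

lemma norm_odd (α β : ℝ) (n : ℕ) :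
    ∫ θ, symPhi α β (2 * n + 1) θ ^ 2 ∂(jacobiMeasurePlus α β) ≤ 1 := by
  have h := cJ_sq_le (α + 1) (β + 1) n
  have e : ∫ θ, symPhi α β (2 * n + 1) θ ^ 2 ∂(jacobiMeasurePlus α β) =
      1 / 2 * (cJ (α + 1) (β + 1) n ^ 2 *
      ∫ θ, jacobiP (α + 1) (β + 1) n (Real.cos θ) ^ 2 ∂(jacobiMeasurePlus (α + 1) (β + 1))) := by
    rw [integral_mup, integral_mup, ← integral_const_mul, ← integral_const_mul]
    refine setIntegral_congr_fun measurableSet_Ioo fun θ hθ => ?_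
    have hn : ¬ Even (2 * n + 1) := by simp
    have hS := sin_half_pos hθ
    have hC := cos_half_pos hθ
    have e1 : (2 * (α + 1) + 1) = (2 * α + 1) + (2 : ℕ) := by push_cast; ring
    have e2 : (2 * (β + 1) + 1) = (2 * β + 1) + (2 : ℕ) := by push_cast; ring
    rw [jPsi_sq α β hθ, jPsi_sq (α + 1) (β + 1) hθ, symPhi, if_neg hn, trigP, Nat.add_sub_cancel,
      Nat.mul_div_cancel_left n two_pos, e1, e2, Real.rpow_add_natCast hS.ne',
      Real.rpow_add_natCast hC.ne', mul_pow, mul_pow, sqrt2_inv_sq, sin_eq_half θ]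
    ring
  rw [e]
  linarith

lemma oddPair (α β : ℝ) (hα : -1 < α) (hβ : -1 < β) :
    ∃ κ e, JPair α β κ (fun n => √(jLam α β (n + 1))) e (fun n => symPhi α β (2 * n + 1)) := by
  have hs : -1 < α + β + 1 := by linarith
  have hp := mkPair α β hα hβ (fun n => n + 1) (add_left_injective 1) (fun n => Nat.le_succ n)
    (fun n => le_rfl) (aOdd α β) fun n => by
      have h := norm_odd α β n
      rw [symPhi_odd α β hα hβ] at h
      have h3 := kap_pos hs (Nat.succ_ne_zero n)
      simp only [Nat.succ_eq_add_one] at h3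
      have : ∀ x θ, (x * pd α β (n + 1) θ) ^ 2 =
          (x ^ 2) * (pd α β (n + 1) θ * pd α β (n + 1) θ) := fun x θ => by ring
      simp_rw [this] at h
      rw [integral_const_mul, ibp α β hα hβ, neg_sq, div_pow, Real.sq_sqrt h3.le, ← mul_assoc,
        div_mul_cancel₀ _ h3.ne'] at h
      exact h
  have he : (fun n => symPhi α β (2 * n + 1)) = fun n θ => -(aOdd α β n /
      √(((n + 1 : ℕ) : ℝ) * ((n + 1 : ℕ) + (α + β + 1)))) * pd α β (n + 1) θ :=
    funext fun n => symPhi_odd α β hα hβ n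
  rw [he]
  exact ⟨_, _, hp⟩

lemma sq_rpow_half (x : ℝ≥0∞) : (x ^ (1 / 2 : ℝ)) ^ 2 = x := by
  rw [← ENNReal.rpow_natCast, ← ENNReal.rpow_mul]; norm_num

lemma final_step {μ : Measure ℝ} {f : ℝ → ℝ} (hfi : Integrable (fun θ => f θ ^ 2) μ) {G : ℝ}
    (hG : 0 < G) {X : ℝ≥0∞} (h : X ≤ ENNReal.ofReal ((∫ θ, f θ ^ 2 ∂μ) * G)) :
    X ^ (1 / 2 : ℝ) ≤ ENNReal.ofReal (√G) * (∫⁻ θ, ENNReal.ofReal (f θ ^ 2) ∂μ) ^ (1 / 2 : ℝ) := by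
  refine (ENNReal.rpow_le_rpow h (by norm_num)).trans ?_
  rw [mul_comm, ENNReal.ofReal_mul hG.le, ofReal_integral_eq_lintegral_ofReal hfi
    (Filter.Eventually.of_forall fun θ => sq_nonneg _), ENNReal.mul_rpow_of_nonneg _ _ (by norm_num),
    ENNReal.ofReal_rpow_of_nonneg hG.le (by norm_num), Real.sqrt_eq_rpow]

lemma altF_mem (N : ℕ) (e o : ℕ → ℝ → ℝ) : altF N e o = e ∨ altF N e o = o := by
  unfold altF; split_ifs <;> simp

/-- Theorem (L²(μ⁺) boundedness of the restricted square functions). -/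
theorem restrictedSquareFunctions_L2_bounded (α β : ℝ) (hα : -1 < α) (hβ : -1 < β)
    (M N : ℕ) (hMN : 0 < M + N) :
    ∃ C : ℝ, 0 < C ∧ ∀ f : ℝ → ℝ, Measurable f →
      (∫⁻ θ, ENNReal.ofReal (f θ ^ 2) ∂(jacobiMeasurePlus α β)) < ∞ →
      (∫⁻ θ, restG α β M N f θ ^ 2 ∂(jacobiMeasurePlus α β)) ^ (1 / 2 : ℝ) ≤
          ENNReal.ofReal C *
            (∫⁻ θ, ENNReal.ofReal (f θ ^ 2) ∂(jacobiMeasurePlus α β)) ^ (1 / 2 : ℝ) ∧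
      (∫⁻ θ, restGtil α β M N f θ ^ 2 ∂(jacobiMeasurePlus α β)) ^ (1 / 2 : ℝ) ≤
          ENNReal.ofReal C *
            (∫⁻ θ, ENNReal.ofReal (f θ ^ 2) ∂(jacobiMeasurePlus α β)) ^ (1 / 2 : ℝ) := by
  have hpos : (0 : ℝ) < 2 * M + 2 * N := by
    have : (0 : ℝ) < M + N := by exact_mod_cast hMN
    linarith
  have hG : 0 < Real.Gamma (2 * M + 2 * N) := Real.Gamma_pos_of_pos hpos
  refine ⟨√(Real.Gamma (2 * M + 2 * N)), Real.sqrt_pos.2 hG, fun f hf hfin => ?_⟩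
  have hfi : Integrable (fun θ => f θ ^ 2) (jacobiMeasurePlus α β) := by
    refine ⟨(hf.pow_const 2).aestronglyMeasurable, ?_⟩
    rw [hasFiniteIntegral_iff_ofReal (Filter.Eventually.of_forall fun θ => sq_nonneg _)]
    exact hfin
  constructor
  · refine final_step hfi hG ?_
    obtain ⟨κ, o, P⟩ := evenPair α β hα hβ
    have := square_est hα hβ P (Or.inl rfl) (altF_mem N _ o) hMN (deltaEven α β N)
      (fun b hb x hx => P.deltaEven_eq hα hβ hb N x hx) hf hfi
    simp only [restG, restH, sq_rpow_half]
    exact this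
  · refine final_step hfi hG ?_
    obtain ⟨κ, e, P⟩ := oddPair α β hα hβ
    have := square_est hα hβ P (Or.inr rfl) (altF_mem N _ e).symm hMN (deltaOdd α β N)
      (fun b hb x hx => P.deltaOdd_eq hα hβ hb N x hx) hf hfi
    simp only [restGtil, restHtil, sq_rpow_half]
    exact this
end
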